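/- For each m ∈ ℕ there is a constant c(m) > 0 such that for all d, k, n ∈ ℕ and every F ∈ 𝔉_d^s one has ρ_m(F^n, F^{n+2k}) ≤ c(m) · k · n^{−1}. -/

import Mathlib

open MeasureTheory RealInnerProductSpace
open scoped ENNReal

noncomputable section

abbrev Euc (d : ℕ) := EuclideanSpace ℝ (Fin d)

/-- Convolution of two measures on an additive structure. -/
def mconv {α : Type*} [MeasurableSpace α] [Add α] (μ ν : Measure α) : Measure α :=
  (μ.prod ν).map (fun p => p.1 + p.2)

/-- Convolution power `μ^{*n}`, with `μ^{*0}` the Dirac measure at `0`. -/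
def convPow {α : Type*} [MeasurableSpace α] [AddMonoid α] (μ : Measure α) : ℕ → Measure α
  | 0 => Measure.dirac 0
  | n + 1 => mconv (convPow μ n) μ

/-- Convolution product of a finite family of measures. -/
def convProd {α : Type*} [MeasurableSpace α] [AddMonoid α] :
    ∀ {n : ℕ}, (Fin n → Measure α) → Measure α
  | 0, _ => Measure.dirac 0
  | n + 1, G => mconv (convProd (fun i : Fin n => G i.castSucc)) (G (Fin.last n))

/-- The compound Poisson measure `e(a·μ) = e^{-a} ∑_k a^k μ^{*k}/k!`. -/
def cpois {α : Type*} [MeasurableSpace α] [AddMonoid α] (a : ℝ) (μ : Measure α) : Measure α :=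
  Measure.sum fun k : ℕ =>
    (ENNReal.ofReal (Real.exp (-a) * a ^ k / k.factorial)) • convPow μ k

/-- A measure is symmetric if it is invariant under `x ↦ -x`. -/
def IsSymmMeasure {d : ℕ} (μ : Measure (Euc d)) : Prop :=
  μ.map (fun x => -x) = μ

/-- Characteristic function of a measure on `ℝ^d`. -/
def charFn {d : ℕ} (μ : Measure (Euc d)) (t : Euc d) : ℂ :=
  ∫ x, Complex.exp ((⟪t, x⟫ : ℂ) * Complex.I) ∂μ

/-- Characteristic function of a measure on `ℝ`. -/
def charFn1 (μ : Measure ℝ) (t : ℝ) : ℂ :=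
  ∫ x, Complex.exp (((t * x : ℝ) : ℂ) * Complex.I) ∂μ

/-- Convex polyhedra determined by the directions `t 1, …, t m`. -/
def polyhedraOn {d m : ℕ} (t : Fin m → Euc d) : Set (Set (Euc d)) :=
  {X | ∃ a b : Fin m → EReal,
    X = {x | ∀ j, a j ≤ ((⟪x, t j⟫ : ℝ) : EReal) ∧ ((⟪x, t j⟫ : ℝ) : EReal) ≤ b j}}

/-- The collection `𝔛_m` of convex polyhedra determined by `m` pairs of parallel hyperplanes. -/
def polyhedra (d m : ℕ) : Set (Set (Euc d)) :=
  {X | ∃ t : Fin m → Euc d, X ∈ polyhedraOn t}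

/-- The distance `ρ_m(G,H) = sup_{X ∈ 𝔛_m} |G{X} - H{X}|`. -/
def rhoPoly {d : ℕ} (m : ℕ) (G H : Measure (Euc d)) : ℝ :=
  ⨆ X ∈ polyhedra d m, |(G X).toReal - (H X).toReal|

/-- The Lévy concentration function `Q(μ, b) = sup_x μ[x, x+b]`. -/
def concFn (μ : Measure ℝ) (b : ℝ) : ℝ :=
  ⨆ x : ℝ, (μ (Set.Icc x (x + b))).toReal

/-- `q(H, X) = inf_{‖t‖=1} Q(𝓛(⟨ξ,t⟩), λ{⟨x,t⟩ : x ∈ X})` where `H = 𝓛(ξ)`. -/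
def qFn {d : ℕ} (H : Measure (Euc d)) (X : Set (Euc d)) : ℝ :=
  ⨅ t ∈ {t : Euc d | ‖t‖ = 1},
    concFn (H.map fun x => ⟪x, t⟫) (volume ((fun x => ⟪x, t⟫) '' X)).toReal

/-- The uniform (Kolmogorov) distance on `ℝ^d`. -/
def kolmDist {d : ℕ} (G H : Measure (Euc d)) : ℝ :=
  ⨆ x : Euc d, |(G {y | ∀ i, y i ≤ x i}).toReal - (H {y | ∀ i, y i ≤ x i}).toReal|

/-- The uniform (Kolmogorov) distance on `ℝ`. -/
def kolmDist1 (G H : Measure ℝ) : ℝ :=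
  ⨆ x : ℝ, |(G (Set.Iic x)).toReal - (H (Set.Iic x)).toReal|

end

set_option linter.all false

namespace Disc

section basic
variable {G A : Type*} [AddCommGroup G] [Fintype G] [AddCommGroup A] [Fintype A]

/-- weighted translation operator -/
noncomputable def op (π : G →+ A) (a : G → ℝ) : (A → ℝ) →ₗ[ℝ] (A → ℝ) where
  toFun f := fun v => ∑ y, a y * f (v + π y)
  map_add' f g := by
    funext v; simp [mul_add, Finset.sum_add_distrib]
  map_smul' c f := by
    funext v; simp [Finset.mul_sum, mul_left_comm]

def ip (f g : A → ℝ) : ℝ := ∑ v, f v * g v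

noncomputable def nm (f : A → ℝ) : ℝ := Real.sqrt (ip f f)

def sh (x : A) (f : A → ℝ) : A → ℝ := fun v => f (v + x)

open Classical in
noncomputable def pw (F : G → ℝ) : ℕ → G → ℝ
  | 0 => Pi.single 0 1
  | n + 1 => fun x => ∑ y, pw F n y * F (x - y)

structure IsSP (F : G → ℝ) : Prop where
  nonneg : ∀ y, 0 ≤ F y
  sum : ∑ y, F y = 1
  even : ∀ y, F (-y) = F y

theorem op_apply (π : G →+ A) (a : G → ℝ) (f : A → ℝ) (v : A) :
    op π a f v = ∑ y, a y * f (v + π y) := rfl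

theorem ip_comm (f g : A → ℝ) : ip f g = ip g f := by
  simp [ip, mul_comm]

theorem ip_self_nonneg (f : A → ℝ) : 0 ≤ ip f f :=
  Finset.sum_nonneg fun v _ => mul_self_nonneg _

theorem nm_nonneg (f : A → ℝ) : 0 ≤ nm f := Real.sqrt_nonneg _

theorem nm_sq (f : A → ℝ) : nm f ^ 2 = ip f f := Real.sq_sqrt (ip_self_nonneg f)

theorem ip_sub_left (f g h : A → ℝ) : ip (f - g) h = ip f h - ip g h := by
  simp [ip, sub_mul]

theorem ip_sub_right (f g h : A → ℝ) : ip h (f - g) = ip h f - ip h g := by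
  simp [ip, mul_sub]

theorem ip_smul_left (c : ℝ) (f g : A → ℝ) : ip (c • f) g = c * ip f g := by
  simp [ip, Finset.mul_sum, mul_assoc]

theorem ip_smul_right (c : ℝ) (f g : A → ℝ) : ip f (c • g) = c * ip f g := by
  rw [ip_comm, ip_smul_left, ip_comm]

theorem ip_le (f g : A → ℝ) : ip f g ≤ nm f * nm g := by
  unfold ip nm
  rw [← Real.sqrt_mul (ip_self_nonneg f)]
  apply Real.le_sqrt_of_sq_le
  have := Finset.sum_mul_sq_le_sq_mul_sq Finset.univ f g
  simpa [ip, pow_two] using this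

theorem abs_ip_le (f g : A → ℝ) : |ip f g| ≤ nm f * nm g := by
  rw [abs_le]
  refine ⟨?_, ip_le f g⟩
  have h := ip_le ((-1 : ℝ) • f) g
  rw [ip_smul_left] at h
  have : nm ((-1 : ℝ) • f) = nm f := by
    unfold nm; rw [ip_smul_left, ip_smul_right]; congr 1; ring
  rw [this] at h; linarith

theorem nm_smul (c : ℝ) (f : A → ℝ) : nm (c • f) = |c| * nm f := by
  unfold nm; rw [ip_smul_left, ip_smul_right, ← mul_assoc, Real.sqrt_mul (mul_self_nonneg c), Real.sqrt_mul_self_eq_abs]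

theorem nm_add_le (f g : A → ℝ) : nm (f + g) ≤ nm f + nm g := by
  apply Real.sqrt_le_iff.2
  refine ⟨add_nonneg (nm_nonneg _) (nm_nonneg _), ?_⟩
  have h : ip (f + g) (f + g) = ip f f + 2 * ip f g + ip g g := by
    unfold ip; rw [Finset.mul_sum, ← Finset.sum_add_distrib, ← Finset.sum_add_distrib]
    apply Finset.sum_congr rfl; intros; simp; ring
  rw [h, ← nm_sq f, ← nm_sq g]
  nlinarith [ip_le f g]

theorem nm_sub_le (f g h : A → ℝ) : nm (f - h) ≤ nm (f - g) + nm (g - h) := by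
  have := nm_add_le (f - g) (g - h)
  simpa using this

theorem nm_sub_le' (f g : A → ℝ) : nm (f - g) ≤ nm f + nm g := by
  have := nm_add_le f ((-1 : ℝ) • g)
  rw [nm_smul] at this
  simpa [sub_eq_add_neg] using this

theorem nm_mono {f g : A → ℝ} (h0 : ∀ v, 0 ≤ f v) (h : ∀ v, f v ≤ g v) : nm f ≤ nm g := by
  apply Real.sqrt_le_sqrt
  exact Finset.sum_le_sum fun v _ => mul_le_mul (h v) (h v) (h0 v) ((h0 v).trans (h v))

theorem ip_sh (x : A) (f g : A → ℝ) : ip (sh x f) (sh x g) = ip f g :=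
  Equiv.sum_comp (Equiv.addRight x) (fun v => f v * g v)

theorem nm_sh (x : A) (f : A → ℝ) : nm (sh x f) = nm f := by
  unfold nm; rw [ip_sh]

theorem sh_sub (x : A) (f g : A → ℝ) : sh x (f - g) = sh x f - sh x g := rfl

theorem sh_sh (x y : A) (f : A → ℝ) : sh x (sh y f) = sh (x + y) f := by
  funext v; simp [sh, add_assoc]

theorem sh_zero (f : A → ℝ) : sh 0 f = f := by funext v; simp [sh]

theorem ip_sh_right (x : A) (f g : A → ℝ) : ip f (sh x g) = ip (sh (-x) f) g := by
  rw [← ip_sh (-x), sh_sh]; simp [sh_zero]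

theorem op_sh (π : G →+ A) (a : G → ℝ) (x : A) (f : A → ℝ) : op π a (sh x f) = sh x (op π a f) := by
  funext v; simp [op_apply, sh, add_right_comm]

theorem op_comm {G' : Type*} [AddCommGroup G'] [Fintype G'] (π : G →+ A) (π' : G' →+ A)
    (a : G → ℝ) (b : G' → ℝ) : Commute (op π a) (op π' b) := by
  show op π a * op π' b = op π' b * op π a
  apply LinearMap.ext; intro f
  funext v
  simp only [Module.End.mul_apply, op_apply, Finset.mul_sum]
  rw [Finset.sum_comm]
  refine Finset.sum_congr rfl fun y _ => Finset.sum_congr rfl fun z _ => ?_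
  rw [add_right_comm]; ring

theorem pow_sh (π : G →+ A) (a : G → ℝ) (x : A) (f : A → ℝ) (n : ℕ) :
    (op π a ^ n) (sh x f) = sh x ((op π a ^ n) f) := by
  induction n generalizing f with
  | zero => simp
  | succ n ih => rw [pow_succ, Module.End.mul_apply, op_sh, ih]; rfl

theorem op_pw (π : G →+ A) (F : G → ℝ) (n : ℕ) : op π (pw F n) = op π F ^ n := by
  classical
  induction n with
  | zero =>
    apply LinearMap.ext; intro f
    funext v
    rw [op_apply]
    simp only [pow_zero, Module.End.one_apply, pw]
    rw [Finset.sum_eq_single 0]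
    · simp
    · intro b _ hb; simp [Pi.single_apply, hb]
    · simp
  | succ n ih =>
    rw [pow_succ, ← ih]
    apply LinearMap.ext; intro f
    funext v
    simp only [Module.End.mul_apply, op_apply, pw, Finset.mul_sum, Finset.sum_mul]
    rw [Finset.sum_comm]
    refine Finset.sum_congr rfl fun y _ => ?_
    rw [← Equiv.sum_comp (Equiv.addRight y)]
    refine Finset.sum_congr rfl fun z _ => ?_
    simp [add_assoc, add_comm, add_left_comm, mul_assoc]

theorem pw_sp {F : G → ℝ} (hF : IsSP F) (n : ℕ) : IsSP (pw F n) := by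
  classical
  induction n with
  | zero =>
    refine ⟨fun y => ?_, ?_, fun y => ?_⟩
    · simp only [pw, Pi.single_apply]; split_ifs <;> norm_num
    · simp [pw]
    · simp [pw, Pi.single_apply]
  | succ n ih =>
    refine ⟨fun y => ?_, ?_, fun y => ?_⟩
    · exact Finset.sum_nonneg fun z _ => mul_nonneg (ih.nonneg z) (hF.nonneg _)
    · simp only [pw]
      rw [Finset.sum_comm]
      have : ∀ y, ∑ x, pw F n y * F (x - y) = pw F n y := by
        intro y
        have h := Equiv.sum_comp (Equiv.subRight y) F
        simp only [Equiv.subRight_apply] at h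
        rw [← Finset.mul_sum, h, hF.sum, mul_one]
      simp [this, ih.sum]
    · simp only [pw]
      rw [← Equiv.sum_comp (Equiv.neg G)]
      refine Finset.sum_congr rfl fun z _ => ?_
      simp only [Equiv.neg_apply]
      rw [ih.even, ← hF.even]; congr 2; abel

theorem op_symm (π : G →+ A) {F : G → ℝ} (hF : IsSP F) (f g : A → ℝ) :
    ip (op π F f) g = ip f (op π F g) := by
  simp only [ip, op_apply, Finset.sum_mul, Finset.mul_sum]
  rw [Finset.sum_comm]
  conv_rhs => rw [Finset.sum_comm]
  rw [← Equiv.sum_comp (Equiv.neg G)]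
  refine Finset.sum_congr rfl fun y _ => ?_
  rw [← Equiv.sum_comp (Equiv.addRight (π y))]
  refine Finset.sum_congr rfl fun v _ => ?_
  simp [hF.even]; ring

theorem pow_symm (π : G →+ A) {F : G → ℝ} (hF : IsSP F) (n : ℕ) (f g : A → ℝ) :
    ip ((op π F ^ n) f) g = ip f ((op π F ^ n) g) := by
  rw [← op_pw]; exact op_symm π (pw_sp hF n) f g

/-- energy identity -/
theorem energy (π : G →+ A) {a : G → ℝ} (ha : IsSP a) (f g : A → ℝ) :
    ∑ y, a y * ip (f - sh (π y) f) (g - sh (π y) g) = 2 * (ip f g - ip f (op π a g)) := by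
  have h1 : ∀ y, ip (f - sh (π y) f) (g - sh (π y) g)
      = 2 * ip f g - ip f (sh (π y) g) - ip f (sh (π (-y)) g) := by
    intro y
    rw [ip_sub_left, ip_sub_right, ip_sub_right, ip_sh, map_neg, ip_sh_right (-π y), neg_neg]; ring
  have h2 : ∑ y, a y * ip f (sh (π y) g) = ip f (op π a g) := by
    simp only [ip, op_apply, sh, Finset.mul_sum]
    rw [Finset.sum_comm]
    refine Finset.sum_congr rfl fun y _ => Finset.sum_congr rfl fun v _ => by ring
  have h3 : ∑ y, a y * ip f (sh (π (-y)) g) = ip f (op π a g) := by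
    rw [← h2, ← Equiv.sum_comp (Equiv.neg G)]
    refine Finset.sum_congr rfl fun y _ => ?_
    simp [ha.even]
  simp only [h1, mul_sub, Finset.sum_sub_distrib, h2, h3, ← Finset.sum_mul, ha.sum]
  ring

theorem energy_nonneg (π : G →+ A) {a : G → ℝ} (ha : IsSP a) (f : A → ℝ) :
    ip f (op π a f) ≤ ip f f := by
  have h := energy π ha f f
  have : 0 ≤ ∑ y, a y * ip (f - sh (π y) f) (f - sh (π y) f) :=
    Finset.sum_nonneg fun y _ => mul_nonneg (ha.nonneg y) (ip_self_nonneg _)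
  linarith

/-- the decreasing sequence of squared norms -/
noncomputable def al (π : G →+ A) (F : G → ℝ) (f : A → ℝ) (j : ℕ) : ℝ :=
  ip ((op π F ^ j) f) ((op π F ^ j) f)

theorem pow_pow_apply (T : (A → ℝ) →ₗ[ℝ] (A → ℝ)) (i j : ℕ) (f : A → ℝ) :
    (T ^ i) ((T ^ j) f) = (T ^ (i + j)) f := by
  rw [pow_add]; rfl

theorem ip_pow (π : G →+ A) {F : G → ℝ} (hF : IsSP F) (f : A → ℝ) (i j k : ℕ) (h : i + j = 2 * k) :
    ip ((op π F ^ i) f) ((op π F ^ j) f) = al π F f k := by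
  unfold al
  rw [pow_symm π hF, pow_symm π hF, pow_pow_apply, pow_pow_apply, h, two_mul]

theorem al_nonneg (π : G →+ A) (F : G → ℝ) (f : A → ℝ) (j : ℕ) : 0 ≤ al π F f j := ip_self_nonneg _

theorem al_zero (π : G →+ A) (F : G → ℝ) (f : A → ℝ) : al π F f 0 = ip f f := rfl

theorem al_convex (π : G →+ A) {F : G → ℝ} (hF : IsSP F) (f : A → ℝ) (j : ℕ) :
    al π F f (j + 1) - al π F f (j + 2) ≤ al π F f j - al π F f (j + 1) := by
  have h := ip_self_nonneg ((op π F ^ j) f - (op π F ^ (j + 2)) f)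
  rw [ip_sub_left, ip_sub_right, ip_sub_right, ip_pow π hF f j j j (by ring),
    ip_pow π hF f j (j+2) (j+1) (by ring), ip_pow π hF f (j+2) j (j+1) (by ring),
    ip_pow π hF f (j+2) (j+2) (j+2) (by ring)] at h
  linarith

theorem al_logconvex (π : G →+ A) {F : G → ℝ} (hF : IsSP F) (f : A → ℝ) (j : ℕ) :
    al π F f (j + 1) ^ 2 ≤ al π F f j * al π F f (j + 2) := by
  have h := ip_le ((op π F ^ j) f) ((op π F ^ (j + 2)) f)
  rw [ip_pow π hF f j (j+2) (j+1) (by ring)] at h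
  have h2 := pow_le_pow_left₀ (al_nonneg _ _ _ _) h 2
  rw [mul_pow, nm_sq, nm_sq] at h2
  exact h2

theorem al_anti1 (π : G →+ A) {F : G → ℝ} (hF : IsSP F) (f : A → ℝ) (j : ℕ) :
    al π F f (j + 1) ≤ al π F f j := by
  have h := energy_nonneg π (pw_sp hF 2) ((op π F ^ j) f)
  rw [op_pw, pow_pow_apply, ip_pow π hF f j (2 + j) (j+1) (by ring)] at h
  exact h

theorem al_diff_anti (π : G →+ A) {F : G → ℝ} (hF : IsSP F) (f : A → ℝ) (i j : ℕ) (h : i ≤ j) :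
    al π F f j - al π F f (j + 1) ≤ al π F f i - al π F f (i + 1) := by
  induction h with
  | refl => exact le_rfl
  | step _ ih => exact (al_convex π hF f _).trans ih

theorem al_le_zero (π : G →+ A) {F : G → ℝ} (hF : IsSP F) (f : A → ℝ) (j : ℕ) :
    al π F f j ≤ ip f f := by
  induction j with
  | zero => exact le_rfl
  | succ j ih => exact (al_anti1 π hF f j).trans ih

theorem al_ritt (π : G →+ A) {F : G → ℝ} (hF : IsSP F) (f : A → ℝ) (j : ℕ) :
    ((j : ℝ) + 1) * (al π F f j - al π F f (j + 1)) ≤ ip f f := by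
  have key : ∀ i, i ≤ j + 1 → (i : ℝ) * (al π F f j - al π F f (j + 1)) ≤ al π F f 0 - al π F f i := by
    intro i
    induction i with
    | zero => intro _; simp
    | succ i ih =>
      intro hi
      have := ih (by omega)
      have := al_diff_anti π hF f i j (by omega)
      push_cast; linarith
  have h := key (j + 1) le_rfl
  have := al_nonneg π F f (j + 1)
  rw [al_zero] at h
  push_cast at h; linarith

theorem al_first (π : G →+ A) {F : G → ℝ} (hF : IsSP F) (f : A → ℝ) (j : ℕ) :
    ip f f - al π F f j ≤ j * (ip f f - al π F f 1) := by
  induction j with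
  | zero => simp [al_zero]
  | succ j ih =>
    have := al_diff_anti π hF f 0 j (by omega)
    rw [al_zero] at this
    push_cast; norm_num at this; linarith

theorem al_energy (π : G →+ A) {F : G → ℝ} (hF : IsSP F) (f : A → ℝ) (j : ℕ) :
    ∑ y, pw F 2 y * nm ((op π F ^ j) f - sh (π y) ((op π F ^ j) f)) ^ 2
      = 2 * (al π F f j - al π F f (j + 1)) := by
  simp only [nm_sq]
  rw [energy π (pw_sp hF 2), op_pw, pow_pow_apply, ip_pow π hF f j (2 + j) (j+1) (by ring)]
  rfl

theorem pow_nm_le (π : G →+ A) {F : G → ℝ} (hF : IsSP F) (f : A → ℝ) (j : ℕ) :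
    nm ((op π F ^ j) f) ≤ nm f :=
  Real.sqrt_le_sqrt (al_le_zero π hF f j)

theorem op_mono (π : G →+ A) {a : G → ℝ} (ha : ∀ y, 0 ≤ a y) {f g : A → ℝ} (h : ∀ v, f v ≤ g v) (v : A) :
    op π a f v ≤ op π a g v :=
  Finset.sum_le_sum fun y _ => mul_le_mul_of_nonneg_left (h _) (ha y)

theorem pow_mono' (π : G →+ A) {F : G → ℝ} (hF : IsSP F) {f g : A → ℝ} (n : ℕ) (h : ∀ v, f v ≤ g v) (v : A) :
    (op π F ^ n) f v ≤ (op π F ^ n) g v := by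
  rw [← op_pw]; exact op_mono π (pw_sp hF n).nonneg h v

theorem op_const (π : G →+ A) {a : G → ℝ} (ha : ∑ y, a y = 1) (c : ℝ) (v : A) :
    op π a (fun _ => c) v = c := by
  rw [op_apply, ← Finset.sum_mul, ha, one_mul]

theorem pow_le_const (π : G →+ A) {F : G → ℝ} (hF : IsSP F) {f : A → ℝ} (n : ℕ) {c : ℝ} (h : ∀ v, f v ≤ c) (v : A) :
    (op π F ^ n) f v ≤ c := by
  rw [← op_pw]
  exact (op_mono π (pw_sp hF n).nonneg (g := fun _ => c) h v).trans_eq (op_const π (pw_sp hF n).sum c v)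

theorem pow_nonneg' (π : G →+ A) {F : G → ℝ} (hF : IsSP F) {f : A → ℝ} (n : ℕ) (h : ∀ v, 0 ≤ f v) (v : A) :
    0 ≤ (op π F ^ n) f v := by
  rw [← op_pw]
  exact Finset.sum_nonneg fun y _ => mul_nonneg ((pw_sp hF n).nonneg y) (h _)

/-- ratio bound coming from log-convexity -/
theorem al_ratio (π : G →+ A) {F : G → ℝ} (hF : IsSP F) (f : A → ℝ) (N : ℕ) (hN : 0 < N) (κ : ℝ)
    (hpos : 0 < al π F f N) (h : ip f f ≤ Real.exp κ * al π F f N) :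
    al π F f N - al π F f (N + 1) ≤ κ / N * al π F f N := by
  have posall : ∀ j, j ≤ N → 0 < al π F f j := by
    intro j hj
    have : al π F f N ≤ al π F f j := antitone_nat_of_succ_le (f := al π F f) (al_anti1 π hF f) hj
    linarith
  by_cases h0 : al π F f (N + 1) = 0
  · exfalso
    have key : ∀ j, 1 ≤ j → al π F f (j + 1) = 0 → al π F f j = 0 := by
      intro j hj hz
      obtain ⟨i, rfl⟩ : ∃ i, j = i + 1 := ⟨j - 1, by omega⟩
      have := al_logconvex π hF f i
      rw [hz, mul_zero] at this
      exact pow_eq_zero_iff (two_ne_zero) |>.1 (le_antisymm this (sq_nonneg _))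
    exact hpos.ne' (key N hN h0)
  have hpos' : 0 < al π F f (N + 1) := lt_of_le_of_ne (al_nonneg _ _ _ _) (Ne.symm h0)
  set r := al π F f (N + 1) / al π F f N with hr
  have hr0 : 0 < r := div_pos hpos' hpos
  have hstep : ∀ j, j ≤ N → al π F f (N - j) * r ^ j ≥ al π F f N := by
    -- ratios are increasing
    have ratio : ∀ j, j ≤ N → al π F f (N - j + 1) ≤ r * al π F f (N - j) := by
      intro j
      induction j with
      | zero => intro _; simp only [Nat.sub_zero]; rw [hr]; field_simp; exact le_rfl
      | succ j ih =>
        intro hj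
        have h1 := ih (by omega)
        have e : N - j = N - (j + 1) + 1 := by omega
        rw [e] at h1
        have h2 := al_logconvex π hF f (N - (j + 1))
        have p1 := posall (N - (j+1)) (by omega)
        have p2 := posall (N - (j+1) + 1) (by omega)
        set x := al π F f (N - (j + 1))
        set y := al π F f (N - (j + 1) + 1)
        set z := al π F f (N - (j + 1) + 2)
        have : y * y ≤ (r * x) * y := by
          have : x * z ≤ x * (r * y) := mul_le_mul_of_nonneg_left h1 p1.le
          nlinarith
        exact le_of_mul_le_mul_right this p2
    intro j
    induction j with
    | zero => intro _; simp
    | succ j ih =>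
      intro hj
      have h1 := ih (by omega)
      have h2 := ratio (j + 1) hj
      have e : N - (j + 1) + 1 = N - j := by omega
      rw [e] at h2
      have : al π F f (N - j) * r ^ j ≤ (r * al π F f (N - (j + 1))) * r ^ j :=
        mul_le_mul_of_nonneg_right h2 (pow_nonneg hr0.le j)
      rw [pow_succ]; nlinarith
  have h1 := hstep N le_rfl
  rw [Nat.sub_self, al_zero] at h1
  have h2 : 1 ≤ Real.exp κ * r ^ N := by
    have : al π F f N * 1 ≤ al π F f N * (Real.exp κ * r ^ N) := by
      have := mul_le_mul_of_nonneg_right h (pow_nonneg hr0.le N)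
      nlinarith
    exact le_of_mul_le_mul_left this hpos
  have h3 : 0 ≤ κ + N * Real.log r := by
    have := Real.log_nonneg h2
    rwa [Real.log_mul (Real.exp_ne_zero _) (pow_ne_zero _ hr0.ne'), Real.log_exp, Real.log_pow] at this
  have h4 := Real.log_le_sub_one_of_pos hr0
  have hN' : (0 : ℝ) < N := by exact_mod_cast hN
  have h5 : 1 - r ≤ κ / N := by
    rw [le_div_iff₀ hN']; nlinarith
  have h6 : al π F f (N + 1) = r * al π F f N := by rw [hr]; field_simp
  rw [h6]; nlinarith

end basic
end Disc

namespace Disc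

section cyc
variable {L : ℕ} {G : Type*} [AddCommGroup G] [Fintype G]

/-- the cyclic group of order `2^L` -/
abbrev ZL (L : ℕ) := ZMod (2 ^ L)

/-- (multi-)indicator of `{0,…,t-1}` -/
def short (t : ℕ) (v : ZL L) : ℝ := ∑ i ∈ Finset.range t, if (i : ZL L) = v then 1 else 0

/-- uniform distribution on `{0,…,2^j-1}` -/
noncomputable def U (j : ℕ) : ZL L → ℝ := ((1 / 2 : ℝ) ^ j) • short (2 ^ j)

/-- indicator of a finset -/
def ind {A : Type*} [DecidableEq A] (B : Finset A) (v : A) : ℝ := if v ∈ B then 1 else 0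

theorem ind_nonneg {A : Type*} [DecidableEq A] (B : Finset A) (v : A) : 0 ≤ ind B v := by
  unfold ind; split_ifs <;> norm_num

theorem ind_le_one {A : Type*} [DecidableEq A] (B : Finset A) (v : A) : ind B v ≤ 1 := by
  unfold ind; split_ifs <;> norm_num

theorem short_nonneg (t : ℕ) (v : ZL L) : 0 ≤ short t v :=
  Finset.sum_nonneg fun i _ => by split_ifs <;> norm_num

theorem short_mono {s t : ℕ} (h : s ≤ t) (v : ZL L) : short s v ≤ short t v := by
  apply Finset.sum_le_sum_of_subset_of_nonneg
  · intro i hi; simp at *; omega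
  · intro i _ _; split_ifs <;> norm_num

theorem sum_short (t : ℕ) (f : ZL L → ℝ) : ∑ v, short t v * f v = ∑ i ∈ Finset.range t, f i := by
  simp only [short, Finset.sum_mul]
  rw [Finset.sum_comm]
  refine Finset.sum_congr rfl fun i _ => ?_
  simp

theorem short_add (n t : ℕ) : (short (n + t) : ZL L → ℝ) = short n + sh (-(n : ZL L)) (short t) := by
  funext v
  simp only [short, Pi.add_apply, sh]
  rw [Finset.sum_range_add]
  congr 1
  refine Finset.sum_congr rfl fun i _ => ?_
  congr 1
  push_cast
  rw [eq_iff_iff]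
  constructor
  · intro h; rw [← h]; ring
  · intro h; rw [h]; ring

theorem short_swap (n t : ℕ) : (short n : ZL L → ℝ) - sh (-(t : ZL L)) (short n)
    = short t - sh (-(n : ZL L)) (short t) := by
  have h1 := short_add (L := L) n t
  have h2 := short_add (L := L) t n
  rw [add_comm t n, h1] at h2
  rw [sub_eq_sub_iff_add_eq_add]; exact h2

theorem U_nonneg (j : ℕ) (v : ZL L) : 0 ≤ U j v :=
  mul_nonneg (by positivity) (short_nonneg _ _)

theorem sum_U_mul (j : ℕ) (f : ZL L → ℝ) :
    ∑ v, U j v * f v = (1 / 2 : ℝ) ^ j * ∑ i ∈ Finset.range (2 ^ j), f i := by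
  simp only [U, Pi.smul_apply, smul_eq_mul, mul_assoc]
  rw [← Finset.mul_sum, sum_short]

theorem sum_U (j : ℕ) : ∑ v : ZL L, U j v = 1 := by
  have := sum_U_mul (L := L) j (fun _ => 1)
  simp only [mul_one] at this
  rw [this]; simp

theorem U_succ (j : ℕ) : (U (j + 1) : ZL L → ℝ) = (1 / 2 : ℝ) • (U j + sh (-((2 ^ j : ℕ) : ZL L)) (U j)) := by
  unfold U
  rw [pow_succ 2 j, mul_two, short_add]
  funext v
  simp [sh, pow_succ]; ring

theorem cast_inj' {i j : ℕ} (hi : i < 2 ^ L) (hj : j < 2 ^ L) (h : (i : ZL L) = j) : i = j := by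
  have := (ZMod.natCast_eq_natCast_iff' i j (2 ^ L)).1 h
  rwa [Nat.mod_eq_of_lt hi, Nat.mod_eq_of_lt hj] at this

theorem short_le_one {t : ℕ} (ht : t ≤ 2 ^ L) (v : ZL L) : short t v ≤ 1 := by
  unfold short
  rw [Finset.sum_ite, Finset.sum_const_zero, add_zero, Finset.sum_const, nsmul_eq_mul, mul_one]
  have : (Finset.filter (fun x : ℕ => (x : ZL L) = v) (Finset.range t)).card ≤ 1 := by
    rw [Finset.card_le_one]
    intro a ha b hb
    simp at ha hb
    exact cast_inj' (ha.1.trans_le ht) (hb.1.trans_le ht) (ha.2.trans hb.2.symm)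
  exact_mod_cast this

theorem ip_U_le {j : ℕ} (hj : j ≤ L) : ip (U j : ZL L → ℝ) (U j) ≤ (1 / 2 : ℝ) ^ j := by
  have h : ∀ v : ZL L, U j v ≤ (1 / 2 : ℝ) ^ j := by
    intro v
    have := short_le_one (L := L) (Nat.pow_le_pow_right two_pos hj) v
    have h2 : (0 : ℝ) ≤ (1 / 2) ^ j := by positivity
    have := mul_le_mul_of_nonneg_left this h2
    simpa [U] using this
  calc ip (U j : ZL L → ℝ) (U j) ≤ ∑ v : ZL L, U j v * (1 / 2 : ℝ) ^ j :=
        Finset.sum_le_sum fun v _ => mul_le_mul_of_nonneg_left (h v) (U_nonneg j v)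
    _ = (1 / 2 : ℝ) ^ j := by rw [← Finset.sum_mul, sum_U, one_mul]

theorem nm_half {A : Type*} [AddCommGroup A] [Fintype A] (f : A → ℝ) (x : A) :
    nm ((1 / 2 : ℝ) • (f + sh x f)) ≤ nm f := by
  rw [nm_smul]
  have := nm_add_le f (sh x f)
  rw [nm_sh] at this
  rw [abs_of_pos (by norm_num)]; linarith

theorem nm_U_anti {i j : ℕ} (h : i ≤ j) : nm (U j : ZL L → ℝ) ≤ nm (U i : ZL L → ℝ) := by
  induction h with
  | refl => exact le_rfl
  | step _ ih => rw [U_succ]; exact (nm_half _ _).trans ih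

/-- the scale function -/
noncomputable def PP (π : G →+ ZL L) (F : G → ℝ) (N j : ℕ) : ℝ := 2 ^ j * al π F (U j) N

theorem PP_nonneg (π : G →+ ZL L) (F : G → ℝ) (N j : ℕ) : 0 ≤ PP π F N j :=
  mul_nonneg (by positivity) (al_nonneg _ _ _ _)

theorem pow_U_succ (π : G →+ ZL L) (F : G → ℝ) (N j : ℕ) :
    (op π F ^ N) (U (j + 1)) = (1 / 2 : ℝ) • ((op π F ^ N) (U j) + sh (-((2 ^ j : ℕ) : ZL L)) ((op π F ^ N) (U j))) := by
  rw [U_succ, map_smul, map_add, pow_sh]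

theorem PP_succ_le (π : G →+ ZL L) (F : G → ℝ) (N j : ℕ) : PP π F N (j + 1) ≤ 2 * PP π F N j := by
  unfold PP al
  rw [pow_U_succ, ← nm_sq, ← nm_sq]
  have h1 := nm_half ((op π F ^ N) (U j)) (-((2 ^ j : ℕ) : ZL L))
  have h2 := pow_le_pow_left₀ (nm_nonneg _) h1 2
  rw [pow_succ, mul_comm _ (2 : ℝ), mul_assoc]
  gcongr

theorem PP_mono1 (π : G →+ ZL L) {F : G → ℝ} (hF : IsSP F) (N j : ℕ) : PP π F N j ≤ PP π F N (j + 1) := by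
  unfold PP al
  rw [pow_U_succ]
  set k := (op π F ^ N) (U j : ZL L → ℝ)
  have hk : ∀ v, 0 ≤ k v := fun v => pow_nonneg' π hF N (U_nonneg j) v
  set x := -((2 ^ j : ℕ) : ZL L)
  have e : ip ((1 / 2 : ℝ) • (k + sh x k)) ((1 / 2 : ℝ) • (k + sh x k)) = 1 / 2 * (ip k k + ip k (sh x k)) := by
    have e1 : ip (k + sh x k) (k + sh x k) = ip k k + 2 * ip k (sh x k) + ip (sh x k) (sh x k) := by
      unfold ip; rw [Finset.mul_sum, ← Finset.sum_add_distrib, ← Finset.sum_add_distrib]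
      apply Finset.sum_congr rfl; intros; simp; ring
    rw [ip_smul_left, ip_smul_right, e1, ip_sh]; ring
  rw [e]
  have : 0 ≤ ip k (sh x k) := Finset.sum_nonneg fun v _ => mul_nonneg (hk _) (hk _)
  have h2 : (0 : ℝ) < 2 ^ j := by positivity
  rw [pow_succ]; nlinarith

theorem PP_mono (π : G →+ ZL L) {F : G → ℝ} (hF : IsSP F) (N : ℕ) : Monotone (PP π F N) :=
  monotone_nat_of_le_succ (PP_mono1 π hF N)

theorem sum_pow_apply {A : Type*} [AddCommGroup A] [Fintype A] (π : G →+ A) {F : G → ℝ} (hF : IsSP F) (N : ℕ) (f : A → ℝ) :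
    ∑ v, (op π F ^ N) f v = ∑ v, f v := by
  have h1 := pow_symm π hF N f (fun _ => 1)
  rw [← op_pw π F N] at h1
  have h2 : op π (pw F N) (fun _ => (1 : ℝ)) = fun _ => 1 := by
    funext v; exact op_const π (pw_sp hF N).sum 1 v
  rw [h2, op_pw] at h1
  simpa [ip] using h1

theorem PP_L (π : G →+ ZL L) {F : G → ℝ} (hF : IsSP F) (N : ℕ) : 1 ≤ PP π F N L := by
  unfold PP al
  have h := sum_pow_apply π hF N (U L : ZL L → ℝ)
  rw [sum_U] at h
  have h2 := Finset.sum_mul_sq_le_sq_mul_sq Finset.univ (fun _ : ZL L => (1 : ℝ)) ((op π F ^ N) (U L))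
  simp only [one_mul] at h2
  rw [h] at h2
  simp [ZMod.card] at h2
  unfold ip
  simpa [pow_two] using h2

end cyc
end Disc

namespace Disc

section blk
variable {L : ℕ} {G : Type*} [AddCommGroup G] [Fintype G]

/-- translation distance of a function -/
noncomputable def DD {A : Type*} [AddCommGroup A] [Fintype A] (k : A → ℝ) (x : A) : ℝ := nm (k - sh x k)

section dd
variable {A : Type*} [AddCommGroup A] [Fintype A] (k : A → ℝ)
theorem DD_nonneg (x : A) : 0 ≤ DD k x := nm_nonneg _

theorem DD_zero : DD k 0 = 0 := by
  unfold DD; rw [sh_zero, sub_self]; simp [nm, ip]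

theorem nm_sub_comm (f g : A → ℝ) : nm (f - g) = nm (g - f) := by
  have := nm_smul (-1) (g - f)
  rw [show (-1 : ℝ) • (g - f) = f - g by simp] at this
  simpa using this

theorem DD_neg (x : A) : DD k (-x) = DD k x := by
  unfold DD
  rw [← nm_sh x, sh_sub, sh_sh, add_neg_cancel, sh_zero, nm_sub_comm]

theorem DD_add (x y : A) : DD k (x + y) ≤ DD k x + DD k y := by
  unfold DD
  have h := nm_sub_le k (sh x k) (sh (x + y) k)
  rw [← sh_sh x y, ← sh_sub x, nm_sh] at h
  rwa [← sh_sh]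

theorem DD_sub (x y : A) : DD k (x - y) ≤ DD k x + DD k y := by
  rw [sub_eq_add_neg]; have := DD_add k x (-y); rwa [DD_neg] at this

theorem DD_sq (x : A) : DD k x ^ 2 = 2 * (ip k k - ip k (sh x k)) := by
  unfold DD
  rw [nm_sq, ip_sub_left, ip_sub_right, ip_sub_right, ip_sh, ip_comm (sh x k) k]; ring
end dd

theorem DD_short (π : G →+ ZL L) {F : G → ℝ} (hF : IsSP F) (N j : ℕ) (t : ℕ) (ht : t ≤ 2 ^ j) :
    DD ((op π F ^ N) (U (j + 24))) (t : ZL L) ≤ 1 / 2048 * nm ((op π F ^ N) (U (j + 24) : ZL L → ℝ)) := by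
  rw [← DD_neg]
  set J := j + 24 with hJ
  have e : (op π F ^ N) (U J) - sh (-(t : ZL L)) ((op π F ^ N) (U J))
      = ((1 / 2 : ℝ) ^ J) • ((op π F ^ N) (short t) - sh (-((2 ^ J : ℕ) : ZL L)) ((op π F ^ N) (short t))) := by
    rw [← pow_sh, ← pow_sh, ← map_sub, ← map_sub, ← map_smul]
    congr 1
    rw [← short_swap]; funext v; simp [U, sh, mul_sub]
  have h1 : DD ((op π F ^ N) (U J)) (-(t : ZL L)) ≤ (1 / 2 : ℝ) ^ J * (2 * nm ((op π F ^ N) (short t : ZL L → ℝ))) := by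
    unfold DD
    rw [e, nm_smul, abs_of_pos (by positivity)]
    have := nm_sub_le' ((op π F ^ N) (short t)) (sh (-((2 ^ J : ℕ) : ZL L)) ((op π F ^ N) (short t)))
    rw [nm_sh] at this
    apply mul_le_mul_of_nonneg_left _ (by positivity)
    linarith
  have h2 : nm ((op π F ^ N) (short t : ZL L → ℝ)) ≤ nm ((op π F ^ N) (short (2 ^ j) : ZL L → ℝ)) := by
    apply nm_mono
    · intro v; exact pow_nonneg' π hF N (short_nonneg _) v
    · intro v; exact pow_mono' π hF N (short_mono ht) v
  have h3 : nm ((op π F ^ N) (short (2 ^ j) : ZL L → ℝ)) = 2 ^ j * nm ((op π F ^ N) (U j : ZL L → ℝ)) := by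
    have : (short (2 ^ j) : ZL L → ℝ) = (2 ^ j : ℝ) • U j := by
      unfold U; rw [smul_smul, ← mul_pow]; norm_num
    rw [this, map_smul, nm_smul, abs_of_pos (by positivity)]
  have h4 : PP π F N j ≤ PP π F N J := PP_mono π hF N (by omega)
  unfold PP al at h4
  rw [← nm_sq, ← nm_sq] at h4
  set κ := nm ((op π F ^ N) (U J : ZL L → ℝ))
  set ll := nm ((op π F ^ N) (U j : ZL L → ℝ))
  have k0 : 0 ≤ κ := nm_nonneg _
  have l0 : 0 ≤ ll := nm_nonneg _
  have h5 : ll ≤ 4096 * κ := by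
    have : ll ^ 2 ≤ (4096 * κ) ^ 2 := by
      have h2j : (0 : ℝ) < 2 ^ j := by positivity
      rw [hJ, pow_add] at h4
      have : (2 : ℝ) ^ j * ll ^ 2 ≤ 2 ^ j * (4096 * κ) ^ 2 := by nlinarith
      exact le_of_mul_le_mul_left this h2j
    exact (pow_le_pow_iff_left₀ l0 (by positivity) two_ne_zero).1 this
  have h6 : (1 / 2 : ℝ) ^ J * 2 ^ j = 1 / 2 ^ 24 := by
    rw [hJ, pow_add, mul_comm ((1 / 2 : ℝ) ^ j), mul_assoc, ← mul_pow]; norm_num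
  calc _ ≤ (1 / 2 : ℝ) ^ J * (2 * nm ((op π F ^ N) (short t : ZL L → ℝ))) := h1
    _ ≤ (1 / 2 : ℝ) ^ J * (2 * (2 ^ j * ll)) := by rw [← h3]; gcongr
    _ = 1 / 2 ^ 24 * (2 * ll) := by rw [← h6]; ring
    _ ≤ 1 / 2 ^ 24 * (2 * (4096 * κ)) := by gcongr
    _ = _ := by norm_num; ring

theorem ip_conv_le (π : G →+ ZL L) {F : G → ℝ} (hF : IsSP F) (N J : ℕ) (B : Finset (ZL L)) (η : ℝ)
    (hB : ∀ w, (op π F ^ (2 * N)) (ind B) w ≤ η) :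
    ∑ x ∈ B, ip ((op π F ^ N) (U J)) (sh x ((op π F ^ N) (U J))) ≤ η := by
  have e1 : ∀ x, ip ((op π F ^ N) (U J)) (sh x ((op π F ^ N) (U J)))
      = ∑ v : ZL L, U J v * (op π F ^ (2 * N)) (U J) (v + x) := by
    intro x
    rw [← pow_sh, pow_symm π hF, pow_pow_apply, ← two_mul, pow_sh]; rfl
  have e2 : ∀ v : ZL L, ∑ x ∈ B, (op π F ^ (2 * N)) (U J) (v + x) ≤ η := by
    intro v
    have : ∑ x ∈ B, (op π F ^ (2 * N)) (U J) (v + x) = ip (ind B) (sh v ((op π F ^ (2 * N)) (U J))) := by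
      simp [ip, ind, sh, add_comm]
    rw [this, ← pow_sh, ← pow_symm π hF]
    calc ip ((op π F ^ (2 * N)) (ind B)) (sh v (U J)) ≤ ∑ x, η * sh v (U J) x :=
          Finset.sum_le_sum fun x _ => mul_le_mul_of_nonneg_right (hB x) (U_nonneg _ _)
      _ = η := by
          rw [← Finset.mul_sum]
          have : ∑ x, sh v (U J) x = 1 := by
            rw [← sum_U (L := L) J]; exact Equiv.sum_comp (Equiv.addRight v) (U J)
          rw [this, mul_one]
  simp only [e1]
  rw [Finset.sum_comm]
  simp only [← Finset.mul_sum]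
  calc _ ≤ ∑ v : ZL L, U J v * η := Finset.sum_le_sum fun v _ => mul_le_mul_of_nonneg_left (e2 v) (U_nonneg _ _)
    _ = η := by rw [← Finset.sum_mul, sum_U, one_mul]

theorem pigeon (f : ℕ → ℝ) (R c : ℝ) (hR : 0 < R) (hc : 0 < c) (h8 : c ≤ f 8) (h0 : f 0 ≤ R ^ 8 * c) :
    ∃ k < 8, f k ≤ R * f (k + 1) := by
  by_contra! hcon
  have key : ∀ k, k ≤ 8 → R ^ k * c ≤ f (8 - k) := by
    intro k
    induction k with
    | zero => intro _; simpa using h8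
    | succ k ih =>
      intro hk
      have h1 := ih (by omega)
      have h2 := hcon (8 - (k + 1)) (by omega)
      rw [show 8 - (k + 1) + 1 = 8 - k by omega] at h2
      have : R * (R ^ k * c) ≤ R * f (8 - k) := by gcongr
      rw [pow_succ]; nlinarith
  have h1 := key 7 (by omega)
  have h2 := hcon 0 (by omega)
  norm_num at h1
  have : R * (R ^ 7 * c) ≤ R * f 1 := by gcongr
  norm_num at h2
  nlinarith

theorem block1 (π : G →+ ZL L) {F : G → ℝ} (hF : IsSP F) (N : ℕ) (hN : 0 < N) (j i : ℕ) (hj : j ≤ L)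
    (hP : (1 / 2 : ℝ) ^ (i + 1) ≤ PP π F N j) :
    ∃ (φ : ZL L → ℝ) (S : Finset (ZL L)), (∀ v, 0 ≤ φ v) ∧ ip φ φ = 1 ∧
      (∑ y, pw F 2 y * (1 - ip φ (sh (π y) φ)) ≤ 819200000 * 1.21 ^ i / N) ∧
      (∀ v v' w w', ∀ t : ℕ, t < 2 ^ j → φ v ≠ 0 → φ v' ≠ 0 → φ w ≠ 0 → φ w' ≠ 0 →
        (v - v') + (w - w') - (t : ZL L) ∈ S) ∧
      (∀ (B : Finset (ZL L)) (η : ℝ), (∀ w, (op π F ^ (2 * N)) (ind B) w ≤ η) →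
        ((S ∩ B).card : ℝ) ≤ 2 ^ 26 * 2 ^ i * η * 2 ^ j) := by
  classical
  set J := j + 24 with hJ
  set k := (op π F ^ N) (U J : ZL L → ℝ) with hk
  set κ := nm k with hκ
  have hkpos : ∀ v, 0 ≤ k v := fun v => pow_nonneg' π hF N (U_nonneg J) v
  have hκ2 : κ ^ 2 = al π F (U J) N := nm_sq k
  have hPJ : (1 / 2 : ℝ) ^ (i + 1) ≤ 2 ^ J * κ ^ 2 := by
    rw [hκ2]; exact hP.trans (PP_mono π hF N (by omega))
  have hκlow : 1 ≤ 2 ^ 25 * 2 ^ i * 2 ^ j * κ ^ 2 := by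
    have h : (2 : ℝ) ^ (i + 1) * (1 / 2 : ℝ) ^ (i + 1) = 1 := by rw [← mul_pow]; norm_num
    have h2 := mul_le_mul_of_nonneg_left hPJ (show (0 : ℝ) ≤ 2 ^ (i + 1) by positivity)
    rw [h, hJ, pow_add, pow_add] at h2
    calc (1 : ℝ) ≤ _ := h2
      _ = _ := by norm_num; ring
  have hkappaPos : 0 < κ ^ 2 := by
    by_contra hcon
    have : κ ^ 2 = 0 := le_antisymm (not_lt.1 hcon) (sq_nonneg _)
    rw [this] at hκlow; norm_num at hκlow
  have hκpos : 0 < κ := lt_of_le_of_ne (nm_nonneg _) (fun h => by rw [← h] at hkappaPos; norm_num at hkappaPos)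
  let Λ : ℕ → Finset (ZL L) := fun n => Finset.univ.filter fun x => DD k x ≤ (1 / 5) / 2 ^ n * κ
  set S : Finset (ZL L) := Finset.univ.filter fun x => DD k x ≤ κ with hS
  have hDt : ∀ t : ℕ, t ≤ 2 ^ j → DD k (t : ZL L) ≤ 1 / 2048 * κ := fun t ht => DD_short π hF N j t ht
  -- cardinality of S ∩ B
  have hcard : ∀ (B : Finset (ZL L)) (η : ℝ), (∀ w, (op π F ^ (2 * N)) (ind B) w ≤ η) →
        ((S ∩ B).card : ℝ) ≤ 2 ^ 26 * 2 ^ i * η * 2 ^ j := by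
    intro B η hB
    have h1 := ip_conv_le π hF N J B η hB
    have h2 : ((S ∩ B).card : ℝ) * (κ ^ 2 / 2) ≤ η := by
      calc ((S ∩ B).card : ℝ) * (κ ^ 2 / 2) = ∑ x ∈ S ∩ B, κ ^ 2 / 2 := by simp
        _ ≤ ∑ x ∈ S ∩ B, ip k (sh x k) := by
            apply Finset.sum_le_sum
            intro x hx
            have hx' : DD k x ≤ κ := by
              have := (Finset.mem_inter.1 hx).1
              simpa [hS] using this
            have h3 := DD_sq k x
            have h4 := pow_le_pow_left₀ (DD_nonneg k x) hx' 2
            have h5 : ip k k = κ ^ 2 := (nm_sq k).symm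
            rw [h5] at h3; linarith
        _ ≤ ∑ x ∈ B, ip k (sh x k) := by
            apply Finset.sum_le_sum_of_subset_of_nonneg Finset.inter_subset_right
            intro x _ _
            exact Finset.sum_nonneg fun v _ => mul_nonneg (hkpos _) (hkpos _)
        _ ≤ η := h1
    have h0 : (0 : ℝ) ≤ ((S ∩ B).card : ℝ) := by positivity
    have h3 : ((S ∩ B).card : ℝ) * 1 ≤ ((S ∩ B).card : ℝ) * (2 ^ 25 * 2 ^ i * 2 ^ j * κ ^ 2) :=
      mul_le_mul_of_nonneg_left hκlow h0
    have h4 : 2 ^ 26 * 2 ^ i * 2 ^ j * (((S ∩ B).card : ℝ) * (κ ^ 2 / 2)) ≤ 2 ^ 26 * 2 ^ i * 2 ^ j * η :=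
      mul_le_mul_of_nonneg_left h2 (by positivity)
    calc ((S ∩ B).card : ℝ) ≤ ((S ∩ B).card : ℝ) * (2 ^ 25 * 2 ^ i * 2 ^ j * κ ^ 2) := by
          rw [mul_one] at h3; exact h3
      _ = 2 ^ 26 * 2 ^ i * 2 ^ j * (((S ∩ B).card : ℝ) * (κ ^ 2 / 2)) := by ring
      _ ≤ _ := h4
      _ = _ := by ring
  -- pigeonhole
  have h8 : (2 ^ j : ℝ) ≤ (Λ 8).card := by
    have : (Finset.range (2 ^ j)).image (fun t : ℕ => (t : ZL L)) ⊆ Λ 8 := by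
      intro x hx
      obtain ⟨t, ht, rfl⟩ := Finset.mem_image.1 hx
      have h := hDt t (Finset.mem_range.1 ht).le
      simp only [Λ, Finset.mem_filter, Finset.mem_univ, true_and]
      refine h.trans ?_
      apply mul_le_mul_of_nonneg_right _ hκpos.le
      norm_num
    have h2 := Finset.card_le_card this
    rw [Finset.card_image_of_injOn, Finset.card_range] at h2
    · exact_mod_cast h2
    · intro a ha b hb hab
      have hl : 2 ^ j ≤ 2 ^ L := Nat.pow_le_pow_right two_pos hj
      simp at ha hb
      exact cast_inj' (ha.trans_le hl) (hb.trans_le hl) hab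
  have h0 : ((Λ 0).card : ℝ) ≤ (10 * 1.1 ^ i) ^ 8 * 2 ^ j := by
    have hsub : Λ 0 ⊆ S ∩ Finset.univ := by
      intro x hx
      simp only [Λ, Finset.mem_filter, Finset.mem_univ, true_and] at hx
      simp only [hS, Finset.inter_univ, Finset.mem_filter, Finset.mem_univ, true_and]
      refine hx.trans ?_
      norm_num; linarith
    have h1 : ((Λ 0).card : ℝ) ≤ ((S ∩ Finset.univ).card : ℝ) := by exact_mod_cast Finset.card_le_card hsub
    have h2 := hcard Finset.univ 1 (fun w => pow_le_const π hF _ (ind_le_one _) w)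
    refine (h1.trans h2).trans ?_
    apply mul_le_mul_of_nonneg_right _ (by positivity)
    rw [mul_pow, mul_one, ← pow_mul, mul_comm i 8, pow_mul]
    gcongr <;> norm_num
  obtain ⟨q, hq, hqR⟩ := pigeon (fun n => ((Λ n).card : ℝ)) (10 * 1.1 ^ i) (2 ^ j) (by positivity) (by positivity) h8 h0
  set δ := (1 / 5 : ℝ) / 2 ^ (q + 1) with hδ
  have hδpos : 0 < δ := by positivity
  have hδq : (1 / 5 : ℝ) / 2 ^ q = 2 * δ := by rw [hδ, pow_succ]; field_simp
  have hδlow : 1 / 1280 ≤ δ := by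
    have : (2 : ℝ) ^ (q + 1) ≤ 2 ^ 8 := pow_le_pow_right₀ (by norm_num) (by omega)
    rw [hδ, div_le_div_iff₀ (by norm_num) (by positivity)]; linarith
  have hδup : 2 * δ ≤ 1 / 5 := by
    rw [← hδq]; exact div_le_self (by norm_num) (one_le_pow₀ (by norm_num))
  let φ0 : ZL L → ℝ := fun v => max (2 * δ * κ - DD k v) 0
  have hφ0 : ∀ v, 0 ≤ φ0 v := fun v => le_max_right _ _
  have hphiNe : ∀ v, φ0 v ≠ 0 → v ∈ Λ q := by
    intro v hv
    simp only [Λ, Finset.mem_filter, Finset.mem_univ, true_and]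
    rw [hδq]
    by_contra hcon
    apply hv
    exact max_eq_right (by linarith)
  have hphiDD : ∀ v x, |φ0 v - φ0 (v + x)| ≤ DD k x := by
    intro v x
    refine (abs_max_sub_max_le_abs _ _ _).trans ?_
    rw [abs_le]
    have a1 := DD_add k v x
    have a2 := DD_sub k (v + x) x
    rw [add_sub_cancel_right] at a2
    constructor <;> linarith
  have hLq1 : (0 : ℝ) < (Λ (q + 1)).card := by
    have : (0 : ZL L) ∈ Λ (q + 1) := by
      simp only [Λ, Finset.mem_filter, Finset.mem_univ, true_and, DD_zero]; positivity
    exact_mod_cast Finset.card_pos.2 ⟨_, this⟩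
  have hnorm : (δ * κ) ^ 2 * (Λ (q + 1)).card ≤ ip φ0 φ0 := by
    calc (δ * κ) ^ 2 * ((Λ (q + 1)).card : ℝ) = ∑ v ∈ Λ (q + 1), (δ * κ) ^ 2 := by simp [mul_comm]
      _ ≤ ∑ v ∈ Λ (q + 1), φ0 v * φ0 v := by
          apply Finset.sum_le_sum
          intro v hv
          simp only [Λ, Finset.mem_filter, Finset.mem_univ, true_and] at hv
          rw [← hδ] at hv
          have : δ * κ ≤ φ0 v := le_trans (by linarith) (le_max_left _ _)
          rw [pow_two]
          exact mul_le_mul this this (by positivity) (hφ0 v)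
      _ ≤ _ := Finset.sum_le_sum_of_subset_of_nonneg (Finset.subset_univ _) (fun v _ _ => mul_self_nonneg _)
  have hnpos : 0 < ip φ0 φ0 := lt_of_lt_of_le (by positivity) hnorm
  have hdiff : ∀ x, DD φ0 x ^ 2 ≤ 2 * (Λ q).card * DD k x ^ 2 := by
    intro x
    unfold DD
    rw [nm_sq]
    have hpt : ∀ v, (φ0 - sh x φ0) v * (φ0 - sh x φ0) v
        ≤ (ind (Λ q) v + ind (Λ q) (v + x)) * DD k x ^ 2 := by
      intro v
      simp only [Pi.sub_apply, sh]
      by_cases hv : φ0 v = 0 ∧ φ0 (v + x) = 0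
      · rw [hv.1, hv.2]; simp
        exact mul_nonneg (add_nonneg (ind_nonneg _ _) (ind_nonneg _ _)) (sq_nonneg _)
      · have h1 : 1 ≤ ind (Λ q) v + ind (Λ q) (v + x) := by
          rw [not_and_or] at hv
          rcases hv with hv | hv
          · have := hphiNe _ hv
            have : ind (Λ q) v = 1 := if_pos this
            have := ind_nonneg (Λ q) (v + x); linarith
          · have := hphiNe _ hv
            have : ind (Λ q) (v + x) = 1 := if_pos this
            have := ind_nonneg (Λ q) v; linarith
        have h2 := sq_le_sq' (by linarith [abs_nonneg (φ0 v - φ0 (v + x)), DD_nonneg k x]) (hphiDD v x)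
        rw [sq_abs] at h2
        nlinarith [sq_nonneg (DD k x)]
    have hs : ∑ v, ind (Λ q) v = (Λ q).card := by simp [ind]
    have hs2 : ∑ v, ind (Λ q) (v + x) = (Λ q).card := by
      rw [← hs]; exact Equiv.sum_comp (Equiv.addRight x) (ind (Λ q))
    calc ip (φ0 - sh x φ0) (φ0 - sh x φ0) ≤ ∑ v, (ind (Λ q) v + ind (Λ q) (v + x)) * DD k x ^ 2 :=
          Finset.sum_le_sum fun v _ => hpt v
      _ = _ := by rw [← Finset.sum_mul, Finset.sum_add_distrib, hs, hs2]; unfold DD; ring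
  set ν := nm φ0 with hν
  have hν2 : ν ^ 2 = ip φ0 φ0 := nm_sq φ0
  have hνpos : 0 < ν := Real.sqrt_pos.2 hnpos
  set φ := ν⁻¹ • φ0 with hφ
  have hipφ : ip φ φ = 1 := by
    rw [hφ, ip_smul_left, ip_smul_right, ← hν2]; field_simp
  have hφne : ∀ v, φ v ≠ 0 → DD k v ≤ 1 / 5 * κ := by
    intro v hv
    have : φ0 v ≠ 0 := by intro h; apply hv; simp [hφ, h]
    have := hphiNe v this
    simp only [Λ, Finset.mem_filter, Finset.mem_univ, true_and] at this
    rw [hδq] at this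
    nlinarith
  refine ⟨φ, S, ?_, hipφ, ?_, ?_, hcard⟩
  · intro v; exact mul_nonneg (inv_nonneg.2 hνpos.le) (hφ0 v)
  · have e1 : ∀ x, 1 - ip φ (sh x φ) ≤ 10 * 1.1 ^ i * 1280 ^ 2 / κ ^ 2 * DD k x ^ 2 := by
      intro x
      have h1 := DD_sq φ0 x
      have h2 := hdiff x
      have h3 : ip φ (sh x φ) = ν⁻¹ ^ 2 * ip φ0 (sh x φ0) := by
        have : sh x φ = ν⁻¹ • sh x φ0 := rfl
        rw [this, hφ, ip_smul_left, ip_smul_right]; ring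
      have h4 : 1 - ip φ (sh x φ) = (DD φ0 x ^ 2 / 2) / ip φ0 φ0 := by
        rw [h3, h1, inv_pow, hν2]; field_simp
      rw [h4, div_le_iff₀ hnpos]
      set d2 := DD k x ^ 2
      have hd2 : 0 ≤ d2 := sq_nonneg _
      have h5 : ((Λ q).card : ℝ) ≤ 10 * 1.1 ^ i * 1280 ^ 2 / κ ^ 2 * ip φ0 φ0 := by
        calc ((Λ q).card : ℝ) ≤ 10 * 1.1 ^ i * (Λ (q + 1)).card := hqR
          _ = 10 * 1.1 ^ i * 1280 ^ 2 / κ ^ 2 * (((1 / 1280) * κ) ^ 2 * (Λ (q + 1)).card) := by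
              field_simp
          _ ≤ 10 * 1.1 ^ i * 1280 ^ 2 / κ ^ 2 * ((δ * κ) ^ 2 * (Λ (q + 1)).card) := by gcongr
          _ ≤ _ := by gcongr
      calc DD φ0 x ^ 2 / 2 ≤ (Λ q).card * d2 := by linarith
        _ ≤ (10 * 1.1 ^ i * 1280 ^ 2 / κ ^ 2 * ip φ0 φ0) * d2 := by gcongr
        _ = _ := by ring
    have e2 : ∑ y, pw F 2 y * (1 - ip φ (sh (π y) φ))
        ≤ 10 * 1.1 ^ i * 1280 ^ 2 / κ ^ 2 * (2 * (al π F (U J) N - al π F (U J) (N + 1))) := by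
      rw [← al_energy π hF, Finset.mul_sum]
      apply Finset.sum_le_sum
      intro y _
      have := mul_le_mul_of_nonneg_left (e1 (π y)) ((pw_sp hF 2).nonneg y)
      refine this.trans_eq ?_
      unfold DD; ring
    have e3 : al π F (U J) N - al π F (U J) (N + 1) ≤ ((i : ℝ) + 25) / N * al π F (U J) N := by
      apply al_ratio π hF (U J) N hN
      · rw [← hκ2]; exact hkappaPos
      · rw [← hκ2]
        have h1 : ip (U J : ZL L → ℝ) (U J) ≤ (1 / 2 : ℝ) ^ j := by
          rw [← nm_sq]
          have := pow_le_pow_left₀ (nm_nonneg _) (nm_U_anti (L := L) (show j ≤ J by omega)) 2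
          refine this.trans ?_
          rw [nm_sq]; exact ip_U_le hj
        have h2 : (2 : ℝ) ^ (i + 25) ≤ Real.exp (i + 25) := by
          have := Real.add_one_le_exp (1 : ℝ)
          have h3 : (2 : ℝ) ≤ Real.exp 1 := by linarith
          calc (2 : ℝ) ^ (i + 25) ≤ Real.exp 1 ^ (i + 25) := by gcongr
            _ = _ := by rw [← Real.exp_nat_mul]; push_cast; ring_nf
        have h3 : (1 / 2 : ℝ) ^ j ≤ 2 ^ (i + 25) * κ ^ 2 := by
          have h4 := mul_le_mul_of_nonneg_left hκlow (show (0 : ℝ) ≤ (1 / 2) ^ j by positivity)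
          have h5 : (1 / 2 : ℝ) ^ j * 2 ^ j = 1 := by rw [← mul_pow]; norm_num
          calc (1 / 2 : ℝ) ^ j = (1 / 2 : ℝ) ^ j * 1 := by ring
            _ ≤ _ := h4
            _ = ((1 / 2 : ℝ) ^ j * 2 ^ j) * (2 ^ 25 * 2 ^ i) * κ ^ 2 := by ring
            _ = _ := by rw [h5]; ring
        exact h1.trans (h3.trans (by gcongr))
    have e4 : (i : ℝ) + 25 ≤ 25 * 1.1 ^ i := by
      have := one_add_mul_le_pow (show (-2 : ℝ) ≤ 0.1 by norm_num) i
      norm_num at this ⊢; linarith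
    have hN' : (0 : ℝ) < N := by exact_mod_cast hN
    have e121 : (1.21 : ℝ) ^ i = 1.1 ^ i * 1.1 ^ i := by rw [← mul_pow]; norm_num
    calc _ ≤ _ := e2
      _ ≤ 10 * 1.1 ^ i * 1280 ^ 2 / κ ^ 2 * (2 * (((i : ℝ) + 25) / N * κ ^ 2)) := by
          apply mul_le_mul_of_nonneg_left _ (by positivity)
          rw [hκ2]; linarith
      _ ≤ 10 * 1.1 ^ i * 1280 ^ 2 / κ ^ 2 * (2 * ((25 * 1.1 ^ i) / N * κ ^ 2)) := by gcongr
      _ = _ := by rw [e121]; field_simp; norm_num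
  · intro v v' w w' t ht hv hv' hw hw'
    simp only [hS, Finset.mem_filter, Finset.mem_univ, true_and]
    have a1 := DD_sub k ((v - v') + (w - w')) (t : ZL L)
    have a2 := DD_add k (v - v') (w - w')
    have a3 := DD_sub k v v'
    have a4 := DD_sub k w w'
    have a5 := hDt t ht.le
    have b1 := hφne v hv
    have b2 := hφne v' hv'
    have b3 := hφne w hw
    have b4 := hφne w' hw'
    linarith

end blk
end Disc

namespace Disc

section grp
variable {G : Type*} [AddCommGroup G] [Fintype G]

/-- the convolution operator on the group itself -/
noncomputable abbrev opi (a : G → ℝ) : (G → ℝ) →ₗ[ℝ] (G → ℝ) := op (AddMonoidHom.id G) a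

theorem opi_apply (a : G → ℝ) (f : G → ℝ) (v : G) : opi a f v = ∑ y, a y * f (v + y) := rfl

/-- autocorrelation -/
def KK (φ : G → ℝ) (y : G) : ℝ := ip φ (sh y φ)

theorem KK_neg (φ : G → ℝ) (y : G) : KK φ (-y) = KK φ y := by
  unfold KK; rw [ip_sh_right, neg_neg, ip_comm]

theorem KK_nonneg {φ : G → ℝ} (h : ∀ v, 0 ≤ φ v) (y : G) : 0 ≤ KK φ y :=
  Finset.sum_nonneg fun v _ => mul_nonneg (h _) (h _)

theorem KK_le {φ : G → ℝ} (h : ip φ φ = 1) (y : G) : KK φ y ≤ 1 := by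
  have := DD_sq φ y
  have h2 := sq_nonneg (DD φ y)
  unfold KK; rw [h] at this; linarith

theorem ip_opi (a f g : G → ℝ) : ip f (opi a g) = ∑ y, a y * ip f (sh y g) := by
  simp only [ip, opi_apply, sh, Finset.mul_sum]
  rw [Finset.sum_comm]
  refine Finset.sum_congr rfl fun y _ => Finset.sum_congr rfl fun v _ => by ring

theorem mass_le {F : G → ℝ} (hF : IsSP F) {φ : G → ℝ} (h : ip φ φ = 1) (σ : ℕ) :
    ∑ y, pw F (2 * σ) y * (1 - KK φ y) ≤ σ * ∑ y, pw F 2 y * (1 - KK φ y) := by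
  have key : ∀ s, ∑ y, pw F (2 * s) y * (1 - KK φ y) = ip φ φ - al (AddMonoidHom.id G) F φ s := by
    intro s
    simp only [mul_sub, mul_one, Finset.sum_sub_distrib, (pw_sp hF (2 * s)).sum, h]
    congr 1
    unfold KK
    rw [← ip_opi]
    unfold opi
    rw [op_pw, ← ip_pow (AddMonoidHom.id G) hF φ 0 (2 * s) s (by ring)]
    rfl
  rw [key]
  have := key 1
  rw [mul_one] at this
  rw [this]
  exact al_first _ hF φ σ

/-- the tensor product -/
def tens (φ f : G → ℝ) : G × G → ℝ := fun p => φ p.1 * f p.2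

theorem ip_tens (φ f ψ g : G → ℝ) : ip (tens φ f) (tens ψ g) = ip φ ψ * ip f g := by
  simp only [ip, tens, Fintype.sum_prod_type, Finset.sum_mul_sum]
  refine Finset.sum_congr rfl fun y _ => Finset.sum_congr rfl fun v _ => by ring

/-- diagonal hom -/
def dg (G : Type*) [AddCommGroup G] : G →+ G × G := (AddMonoidHom.id G).prod (AddMonoidHom.id G)

theorem sh_dg (y : G) (φ f : G → ℝ) : sh (dg G y) (tens φ f) = tens (sh y φ) (sh y f) := rfl

theorem opnorm {F : G → ℝ} (hF : IsSP F) {φ : G → ℝ} (h : ip φ φ = 1) (σ : ℕ) (f g : G → ℝ) :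
    |ip f (opi (fun y => KK φ y * pw F (2 * σ) y) (g - opi (pw F 2) g))|
      ≤ (2 / ((σ : ℝ) + 1) + 2 * ∑ y, pw F 2 y * (1 - KK φ y)) * nm f * nm g := by
  set e := ∑ y, pw F 2 y * (1 - KK φ y) with he
  have he0 : 0 ≤ e := Finset.sum_nonneg fun y _ => mul_nonneg ((pw_sp hF 2).nonneg y) (by linarith [KK_le h y])
  set TD := op (dg G) F with hTD
  let ir : G →+ G × G := AddMonoidHom.inr G G
  let il : G →+ G × G := AddMonoidHom.inl G G
  have step1 : ∀ g' : G → ℝ, ip f (opi (fun y => KK φ y * pw F (2 * σ) y) g')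
      = ip ((TD ^ σ) (tens φ f)) ((TD ^ σ) (tens φ g')) := by
    intro g'
    rw [pow_symm _ hF, pow_pow_apply, ← two_mul, ← op_pw, ip_opi]
    have : ip (tens φ f) (op (dg G) (pw F (2 * σ)) (tens φ g'))
        = ∑ y, pw F (2 * σ) y * ip (tens φ f) (sh (dg G y) (tens φ g')) := by
      simp only [ip, op_apply, sh, Finset.mul_sum]
      rw [Finset.sum_comm]
      refine Finset.sum_congr rfl fun y _ => Finset.sum_congr rfl fun v _ => by ring
    rw [this]
    refine Finset.sum_congr rfl fun y _ => ?_
    rw [sh_dg, ip_tens]; unfold KK; ring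
  have step2 : tens φ (g - opi (pw F 2) g) = tens φ g - op ir (pw F 2) (tens φ g) := by
    funext p
    simp only [tens, Pi.sub_apply, opi_apply, op_apply, mul_sub, Finset.mul_sum]
    congr 1
    refine Finset.sum_congr rfl fun y _ => ?_
    simp [ir]; ring
  rw [step1, step2, map_sub]
  have comm : (TD ^ σ) (op ir (pw F 2) (tens φ g)) = op ir (pw F 2) ((TD ^ σ) (tens φ g)) := by
    have := (op_comm (dg G) ir F (pw F 2)).pow_left σ
    exact congrArg (fun T : (G × G → ℝ) →ₗ[ℝ] (G × G → ℝ) => T (tens φ g)) this.eq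
  rw [comm]
  have energyb : ∀ f' : G → ℝ, ∑ y, pw F 2 y * nm ((TD ^ σ) (tens φ f') - sh (ir y) ((TD ^ σ) (tens φ f'))) ^ 2
      ≤ (4 / ((σ : ℝ) + 1) + 4 * e) * nm f' ^ 2 := by
    intro f'
    set a := tens φ f'
    set p := (TD ^ σ) a with hp
    have haa : ip a a = nm f' ^ 2 := by rw [ip_tens, h, one_mul, nm_sq]
    have tri : ∀ y, nm (p - sh (ir y) p) ^ 2 ≤ 2 * nm (p - sh (dg G y) p) ^ 2 + 2 * nm (p - sh (il y) p) ^ 2 := by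
      intro y
      have h1 := nm_sub_le p (sh (dg G y) p) (sh (ir y) p)
      have h2 : sh (dg G y) p = sh (ir y) (sh (il y) p) := by
        rw [sh_sh]; congr 1; simp [dg, ir, il]
      have h3 : nm (sh (dg G y) p - sh (ir y) p) = nm (p - sh (il y) p) := by
        rw [h2, ← sh_sub, nm_sh, nm_sub_comm]
      rw [h3] at h1
      have h4 := pow_le_pow_left₀ (nm_nonneg _) h1 2
      nlinarith [sq_nonneg (nm (p - sh (dg G y) p) - nm (p - sh (il y) p))]
    have E1 : ∑ y, pw F 2 y * nm (p - sh (dg G y) p) ^ 2 ≤ 2 / ((σ : ℝ) + 1) * nm f' ^ 2 := by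
      rw [al_energy (dg G) hF a σ]
      have := al_ritt (dg G) hF a σ
      rw [haa] at this
      have hs : (0 : ℝ) < σ + 1 := by positivity
      rw [div_mul_eq_mul_div, le_div_iff₀ hs]; linarith
    have E2 : ∑ y, pw F 2 y * nm (p - sh (il y) p) ^ 2 ≤ 2 * e * nm f' ^ 2 := by
      rw [he, mul_assoc, Finset.sum_mul, Finset.mul_sum]
      apply Finset.sum_le_sum
      intro y _
      have h1 : nm (p - sh (il y) p) ≤ nm (a - sh (il y) a) := by
        rw [hp, ← pow_sh, ← map_sub]; exact pow_nm_le _ hF _ _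
      have h2 : a - sh (il y) a = tens (φ - sh y φ) f' := by
        funext q; simp [a, tens, sh, il, sub_mul]
      have h3 : nm (a - sh (il y) a) ^ 2 = 2 * (1 - KK φ y) * nm f' ^ 2 := by
        rw [nm_sq, h2, ip_tens, ← nm_sq f', ← nm_sq (φ - sh y φ)]
        have := DD_sq φ y
        unfold DD at this
        rw [this, h]; rfl
      have h4 := pow_le_pow_left₀ (nm_nonneg _) h1 2
      rw [h3] at h4
      have := mul_le_mul_of_nonneg_left h4 ((pw_sp hF 2).nonneg y)
      linarith
    calc _ ≤ ∑ y, pw F 2 y * (2 * nm (p - sh (dg G y) p) ^ 2 + 2 * nm (p - sh (il y) p) ^ 2) :=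
          Finset.sum_le_sum fun y _ => mul_le_mul_of_nonneg_left (tri y) ((pw_sp hF 2).nonneg y)
      _ = 2 * ∑ y, pw F 2 y * nm (p - sh (dg G y) p) ^ 2 + 2 * ∑ y, pw F 2 y * nm (p - sh (il y) p) ^ 2 := by
          rw [Finset.mul_sum, Finset.mul_sum, ← Finset.sum_add_distrib]
          refine Finset.sum_congr rfl fun y _ => by ring
      _ ≤ 2 * (2 / ((σ : ℝ) + 1) * nm f' ^ 2) + 2 * (2 * e * nm f' ^ 2) := by linarith
      _ = _ := by ring
  set p := (TD ^ σ) (tens φ f) with hp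
  set q := (TD ^ σ) (tens φ g) with hq
  have en := energy ir (pw_sp hF 2) p q
  rw [ip_sub_right]
  have hval : ip p q - ip p (op ir (pw F 2) q) = 1 / 2 * ∑ y, pw F 2 y * ip (p - sh (ir y) p) (q - sh (ir y) q) := by
    rw [en]; ring
  rw [hval, abs_mul, abs_of_pos (by norm_num : (0 : ℝ) < 1 / 2)]
  have c1 : |∑ y, pw F 2 y * ip (p - sh (ir y) p) (q - sh (ir y) q)|
      ≤ ∑ y, (Real.sqrt (pw F 2 y) * nm (p - sh (ir y) p)) * (Real.sqrt (pw F 2 y) * nm (q - sh (ir y) q)) := by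
    refine (Finset.abs_sum_le_sum_abs _ _).trans (Finset.sum_le_sum fun y _ => ?_)
    have h0 := (pw_sp hF 2).nonneg y
    rw [abs_mul, abs_of_nonneg h0]
    have := mul_le_mul_of_nonneg_left (abs_ip_le (p - sh (ir y) p) (q - sh (ir y) q)) h0
    refine this.trans_eq ?_
    have hs := Real.mul_self_sqrt h0
    calc _ = (Real.sqrt (pw F 2 y) * Real.sqrt (pw F 2 y)) * (nm (p - sh (ir y) p) * nm (q - sh (ir y) q)) := by rw [hs]
      _ = _ := by ring
  have c2 := Finset.sum_mul_sq_le_sq_mul_sq Finset.univ (fun y => Real.sqrt (pw F 2 y) * nm (p - sh (ir y) p))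
    (fun y => Real.sqrt (pw F 2 y) * nm (q - sh (ir y) q))
  simp only [mul_pow, Real.sq_sqrt ((pw_sp hF 2).nonneg _)] at c2
  have c3 := energyb f
  have c4 := energyb g
  rw [← hp] at c3
  rw [← hq] at c4
  set β := 2 / ((σ : ℝ) + 1) + 2 * e with hβ
  have hβ0 : 0 ≤ β := by positivity
  have hβ2 : 4 / ((σ : ℝ) + 1) + 4 * e = 2 * β := by rw [hβ]; ring
  rw [hβ2] at c3 c4
  set Y := ∑ y, (Real.sqrt (pw F 2 y) * nm (p - sh (ir y) p)) * (Real.sqrt (pw F 2 y) * nm (q - sh (ir y) q))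
  have c5 : Y ^ 2 ≤ (2 * β * nm f * nm g) ^ 2 := by
    refine c2.trans ?_
    calc _ ≤ (2 * β * nm f ^ 2) * (2 * β * nm g ^ 2) := by
          apply mul_le_mul c3 c4
          · exact Finset.sum_nonneg fun y _ => mul_nonneg ((pw_sp hF 2).nonneg y) (sq_nonneg _)
          · positivity
      _ = _ := by ring
  have c6 : Y ≤ 2 * β * nm f * nm g := by
    refine (le_abs_self Y).trans (abs_le_of_sq_le_sq c5 ?_)
    exact mul_nonneg (mul_nonneg (by positivity) (nm_nonneg _)) (nm_nonneg _)
  linarith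

end grp
end Disc

namespace Disc

section grp2
variable {G : Type*} [AddCommGroup G] [Fintype G]

theorem opi_comm (a b : G → ℝ) (f : G → ℝ) : opi a (opi b f) = opi b (opi a f) := by
  have := (op_comm (AddMonoidHom.id G) (AddMonoidHom.id G) a b).eq
  exact congrArg (fun T : (G → ℝ) →ₗ[ℝ] (G → ℝ) => T f) this

theorem opi_abs_le (a : G → ℝ) (ha : ∀ y, 0 ≤ a y) (f : G → ℝ) (M : ℝ) (hf : ∀ v, |f v| ≤ M) (v : G) :
    |opi a f v| ≤ (∑ y, a y) * M := by
  rw [opi_apply, Finset.sum_mul]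
  refine (Finset.abs_sum_le_sum_abs _ _).trans (Finset.sum_le_sum fun y _ => ?_)
  rw [abs_mul, abs_of_nonneg (ha y)]
  exact mul_le_mul_of_nonneg_left (hf _) (ha y)

/-- the localised difference kernel -/
noncomputable def XX (F φ : G → ℝ) (σ : ℕ) (z : G) : ℝ :=
  KK φ z * pw F (2 * σ) z - ∑ y, (KK φ (z - y) * pw F (2 * σ) (z - y)) * pw F 2 y

theorem opi_XX (F φ : G → ℝ) (σ : ℕ) (g : G → ℝ) :
    opi (XX F φ σ) g = opi (fun y => KK φ y * pw F (2 * σ) y) (g - opi (pw F 2) g) := by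
  funext v
  set μ : G → ℝ := fun y => KK φ y * pw F (2 * σ) y with hμ
  have hX : ∀ z, XX F φ σ z = μ z - ∑ y, μ (z - y) * pw F 2 y := fun z => rfl
  simp only [opi_apply, hX, Pi.sub_apply, sub_mul, mul_sub, Finset.sum_sub_distrib]
  congr 1
  simp only [Finset.mul_sum, Finset.sum_mul]
  rw [Finset.sum_comm]
  conv_rhs => rw [Finset.sum_comm]
  refine Finset.sum_congr rfl fun y _ => ?_
  rw [← Equiv.sum_comp (Equiv.addRight y)]
  refine Finset.sum_congr rfl fun z _ => ?_
  simp [add_assoc, mul_assoc]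

theorem XX_even {F : G → ℝ} (hF : IsSP F) (φ : G → ℝ) (σ : ℕ) (z : G) : XX F φ σ (-z) = XX F φ σ z := by
  unfold XX
  rw [KK_neg, (pw_sp hF _).even]
  congr 1
  rw [← Equiv.sum_comp (Equiv.neg G)]
  refine Finset.sum_congr rfl fun y _ => ?_
  simp only [Equiv.neg_apply]
  rw [(pw_sp hF 2).even, show -z - -y = -(z - y) by abel, KK_neg, (pw_sp hF _).even]

theorem nm_XX {F : G → ℝ} (hF : IsSP F) {φ : G → ℝ} (h : ip φ φ = 1) (σ : ℕ) (U : G → ℝ) :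
    nm (opi U (XX F φ σ)) ≤ (2 / ((σ : ℝ) + 1) + 2 * ∑ y, pw F 2 y * (1 - KK φ y)) * nm U := by
  set β := (2 / ((σ : ℝ) + 1) + 2 * ∑ y, pw F 2 y * (1 - KK φ y))
  set X' := opi U (XX F φ σ) with hX'
  have e : X' = opi (XX F φ σ) (fun v => U (-v)) := by
    funext z
    rw [hX', opi_apply, opi_apply]
    rw [← Equiv.sum_comp ((Equiv.neg G).trans (Equiv.addRight (-z)))]
    refine Finset.sum_congr rfl fun y _ => ?_
    simp only [Equiv.trans_apply, Equiv.neg_apply, Equiv.coe_addRight]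
    rw [show z + (-y + -z) = -y by abel, XX_even hF, show -y + -z = -(z + y) by abel, mul_comm]
  have nU : nm (fun v => U (-v)) = nm U := by
    unfold nm ip
    congr 1
    exact Equiv.sum_comp (Equiv.neg G) (fun v => U v * U v)
  have key : nm X' ^ 2 ≤ β * nm X' * nm U := by
    rw [nm_sq]
    conv_lhs => rw [e]
    rw [← e]
    conv_lhs => arg 2; rw [e, opi_XX]
    refine (le_abs_self _).trans ?_
    rw [← nU]
    exact opnorm hF h σ X' _
  by_cases h0 : nm X' = 0
  · rw [h0]
    have : 0 ≤ ∑ y, pw F 2 y * (1 - KK φ y) :=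
      Finset.sum_nonneg fun y _ => mul_nonneg ((pw_sp hF 2).nonneg y) (by linarith [KK_le h y])
    have : 0 ≤ β := by positivity
    exact mul_nonneg this (nm_nonneg _)
  · have hp : 0 < nm X' := lt_of_le_of_ne (nm_nonneg _) (Ne.symm h0)
    have : nm X' * nm X' ≤ nm X' * (β * nm U) := by nlinarith
    exact le_of_mul_le_mul_left this hp

theorem blockG [DecidableEq G] {F : G → ℝ} (hF : IsSP F) {φ : G → ℝ} (hφ0 : ∀ v, 0 ≤ φ v) (h : ip φ φ = 1)
    (e : ℝ) (he : ∑ y, pw F 2 y * (1 - KK φ y) ≤ e)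
    (U : G → ℝ) (hU0 : ∀ v, 0 ≤ U v) (hU1 : ∑ v, U v = 1) (gt : G → ℝ) (B : Finset G)
    (hgt : ∀ v, |gt v| ≤ ind B v) (n0 σ : ℕ) (η : ℝ) (hη : ∀ w, (opi F ^ n0) (ind B) w ≤ η)
    (S : Finset G) (hS : ∀ v v' w w' u, φ v ≠ 0 → φ v' ≠ 0 → φ w ≠ 0 → φ w' ≠ 0 → U u ≠ 0 →
      (v - v') + (w - w') - u ∈ S)
    (Q : ℝ) (hQ : ∀ x, ∑ z ∈ S, ind B (x + z) ≤ Q)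
    (g : G → ℝ) (hg : g = fun v => ∑ u, U u * gt (v - u))
    (M : ℝ) (hM : ∀ w, |(opi F ^ n0) (g - (opi F ^ 2) g) w| ≤ M) (w0 : G) :
    |(opi F ^ (n0 + 2 * σ)) (g - (opi F ^ 2) g) w0|
      ≤ (2 / ((σ : ℝ) + 1) + 2 * e) * nm U * Real.sqrt (η * Q) + e * η + σ * e * M := by
  classical
  set e' := ∑ y, pw F 2 y * (1 - KK φ y) with he'
  have K1 := KK_le h
  have K0 := KK_nonneg hφ0
  have p2 := pw_sp hF 2
  have ps := pw_sp hF (2 * σ)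
  have pn := pw_sp hF n0
  have he0 : 0 ≤ e' := Finset.sum_nonneg fun y _ => mul_nonneg (p2.nonneg y) (by linarith [K1 y])
  have hη0 : 0 ≤ η := (pow_nonneg' _ hF n0 (ind_nonneg B) 0).trans (hη 0)
  have hM0 : 0 ≤ M := (abs_nonneg _).trans (hM 0)
  set Dg := g - (opi F ^ 2) g with hDg
  have hT2 : opi F ^ 2 = opi (pw F 2) := (op_pw _ F 2).symm
  -- splitting
  have split : (opi F ^ (n0 + 2 * σ)) Dg w0 = (opi F ^ n0) (opi (XX F φ σ) g) w0
      + opi (fun y => (1 - KK φ y) * pw F (2 * σ) y) ((opi F ^ n0) Dg) w0 := by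
    rw [opi_XX, ← hT2, ← hDg, ← op_pw _ F n0]
    have hc := opi_comm (fun y => (1 - KK φ y) * pw F (2 * σ) y) (pw F n0) Dg
    unfold opi at hc ⊢
    rw [hc, ← Pi.add_apply, ← map_add]
    rw [show n0 + 2 * σ = n0 + (2 * σ) from rfl, pow_add, ← op_pw, ← op_pw, Module.End.mul_apply]
    refine congrArg (fun q : G → ℝ => op (AddMonoidHom.id G) (pw F n0) q w0) ?_
    funext v
    simp only [op_apply, Pi.add_apply, ← Finset.sum_add_distrib]
    refine Finset.sum_congr rfl fun y _ => by ring
  have second : |opi (fun y => (1 - KK φ y) * pw F (2 * σ) y) ((opi F ^ n0) Dg) w0| ≤ σ * e * M := by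
    refine (opi_abs_le _ (fun y => mul_nonneg (by linarith [K1 y]) (ps.nonneg y)) _ M hM w0).trans ?_
    apply mul_le_mul_of_nonneg_right _ hM0
    have := mass_le hF h σ
    calc _ = ∑ y, pw F (2 * σ) y * (1 - KK φ y) := Finset.sum_congr rfl fun y _ => by ring
      _ ≤ σ * e' := this
      _ ≤ _ := by gcongr
  -- the main part
  set X' := opi U (XX F φ σ) with hX'
  let hh : G → ℝ := fun z => (opi F ^ n0) (fun v => |gt v|) (w0 + z)
  have hh0 : ∀ z, 0 ≤ hh z := fun z => pow_nonneg' _ hF n0 (fun v => abs_nonneg _) _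
  have hhη : ∀ z, hh z ≤ η := fun z => (pow_mono' _ hF n0 hgt _).trans (hη _)
  have hhsum : ∑ z ∈ S, hh z ≤ Q := by
    have : ∀ z, hh z = ∑ w, pw F n0 w * |gt (w0 + z + w)| := by
      intro z; simp only [hh]; rw [← op_pw]; rfl
    simp only [this]
    rw [Finset.sum_comm]
    calc _ = ∑ w, pw F n0 w * ∑ z ∈ S, |gt (w0 + z + w)| := by
          refine Finset.sum_congr rfl fun w _ => by rw [Finset.mul_sum]
      _ ≤ ∑ w, pw F n0 w * Q := by
          refine Finset.sum_le_sum fun w _ => mul_le_mul_of_nonneg_left ?_ (pn.nonneg w)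
          refine le_trans (Finset.sum_le_sum fun z _ => ?_) (hQ (w0 + w))
          rw [add_right_comm]; exact hgt _
      _ = Q := by rw [← Finset.sum_mul, pn.sum, one_mul]
  have main_le : |(opi F ^ n0) (opi (XX F φ σ) g) w0| ≤ ∑ z, |X' z| * hh z := by
    have e1 : opi (XX F φ σ) g = opi X' gt := by
      funext v
      rw [opi_apply, opi_apply, hg]
      simp only [hX', opi_apply, Finset.mul_sum, Finset.sum_mul]
      rw [Finset.sum_comm]
      conv_rhs => rw [Finset.sum_comm]
      refine Finset.sum_congr rfl fun u _ => ?_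
      rw [← Equiv.sum_comp (Equiv.addRight u)]
      refine Finset.sum_congr rfl fun z _ => ?_
      simp only [Equiv.coe_addRight]
      rw [show v + (z + u) - u = v + z by abel]; ring
    rw [e1, ← op_pw]
    have hc := opi_comm (pw F n0) X' gt
    unfold opi at hc ⊢
    rw [hc, op_apply]
    refine (Finset.abs_sum_le_sum_abs _ _).trans (Finset.sum_le_sum fun z _ => ?_)
    rw [abs_mul]
    apply mul_le_mul_of_nonneg_left _ (abs_nonneg _)
    simp only [hh]
    rw [← op_pw, op_apply, op_apply]
    refine (Finset.abs_sum_le_sum_abs _ _).trans (Finset.sum_le_sum fun y _ => ?_)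
    rw [abs_mul, abs_of_nonneg (pn.nonneg y)]; exact le_rfl
  -- off-support part
  let W : G → ℝ := fun z => ∑ y, (KK φ (z - y) * pw F (2 * σ) (z - y)) * (if KK φ y = 0 then pw F 2 y else 0)
  have W0 : ∀ z, 0 ≤ W z := fun z => Finset.sum_nonneg fun y _ =>
    mul_nonneg (mul_nonneg (K0 _) (ps.nonneg _)) (by split_ifs; exact p2.nonneg y; exact le_rfl)
  have KKne : ∀ y, KK φ y ≠ 0 → ∃ v v', φ v ≠ 0 ∧ φ v' ≠ 0 ∧ v - v' = y := by
    intro y hy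
    obtain ⟨v, _, hv⟩ := Finset.exists_ne_zero_of_sum_ne_zero hy
    refine ⟨v + y, v, right_ne_zero_of_mul hv, left_ne_zero_of_mul hv, by abel⟩
  obtain ⟨v1, hv1⟩ : ∃ v, φ v ≠ 0 := by
    by_contra! hcon
    simp [ip, hcon] at h
  have off : ∀ z, z ∉ S → |X' z| ≤ opi U W z := by
    intro z hz
    rw [hX', opi_apply, opi_apply]
    refine (Finset.abs_sum_le_sum_abs _ _).trans (Finset.sum_le_sum fun u _ => ?_)
    rw [abs_mul, abs_of_nonneg (hU0 u)]
    by_cases hu : U u = 0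
    · rw [hu]; simp
    apply mul_le_mul_of_nonneg_left _ (hU0 u)
    have k1 : KK φ (z + u) = 0 := by
      by_contra hk
      obtain ⟨v, v', a, b, c⟩ := KKne _ hk
      apply hz
      have := hS v v' v1 v1 u a b hv1 hv1 hu
      rwa [c, sub_self, add_zero, add_sub_cancel_right] at this
    have k2 : XX F φ σ (z + u) = - W (z + u) := by
      unfold XX
      rw [k1, zero_mul, zero_sub]
      congr 1
      refine Finset.sum_congr rfl fun y _ => ?_
      split_ifs with hy
      · rfl
      · have : KK φ (z + u - y) = 0 := by
          by_contra hk
          obtain ⟨v, v', a, b, c⟩ := KKne _ hk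
          obtain ⟨w, w', a', b', c'⟩ := KKne _ hy
          apply hz
          have := hS v v' w w' u a b a' b' hu
          rwa [c, c', sub_add_cancel, add_sub_cancel_right] at this
        rw [this]; ring
    rw [k2, abs_neg, abs_of_nonneg (W0 _)]
  have sumW : ∑ z, W z ≤ e' := by
    simp only [W]
    rw [Finset.sum_comm, he']
    refine Finset.sum_le_sum fun y _ => ?_
    rw [← Finset.sum_mul, mul_comm]
    have h1 : ∑ z, KK φ (z - y) * pw F (2 * σ) (z - y) ≤ 1 := by
      have h2 := Equiv.sum_comp (Equiv.subRight y) (fun z => KK φ z * pw F (2 * σ) z)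
      simp only [Equiv.subRight_apply] at h2
      rw [h2, ← ps.sum]
      exact Finset.sum_le_sum fun z _ => mul_le_of_le_one_left (ps.nonneg z) (K1 z)
    split_ifs with hy
    · rw [hy, sub_zero]
      exact mul_le_mul_of_nonneg_left h1 (p2.nonneg y)
    · rw [zero_mul]; exact mul_nonneg (p2.nonneg y) (by linarith [K1 y])
  have sumUW : ∑ z, opi U W z ≤ e' := by
    simp only [opi_apply]
    rw [Finset.sum_comm]
    have : ∀ u, ∑ z, U u * W (z + u) = U u * ∑ z, W z := by
      intro u
      rw [← Finset.mul_sum]; congr 1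
      exact Equiv.sum_comp (Equiv.addRight u) W
    simp only [this]
    rw [← Finset.sum_mul, hU1, one_mul]; exact sumW
  have hβ := nm_XX hF h σ U
  rw [← hX', ← he'] at hβ
  have partS : ∑ z ∈ S, |X' z| * hh z ≤ (2 / ((σ : ℝ) + 1) + 2 * e) * nm U * Real.sqrt (η * Q) := by
    have c1 := Finset.sum_mul_sq_le_sq_mul_sq S (fun z => |X' z|) hh
    have c2 : ∑ z ∈ S, |X' z| ^ 2 ≤ nm X' ^ 2 := by
      rw [nm_sq]
      calc _ ≤ ∑ z, |X' z| ^ 2 := Finset.sum_le_sum_of_subset_of_nonneg (Finset.subset_univ _) (fun z _ _ => sq_nonneg _)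
        _ = _ := Finset.sum_congr rfl fun z _ => by rw [sq_abs, pow_two]
    have c3 : ∑ z ∈ S, hh z ^ 2 ≤ η * Q := by
      calc _ ≤ ∑ z ∈ S, η * hh z := Finset.sum_le_sum fun z _ => by
            rw [pow_two]; exact mul_le_mul_of_nonneg_right (hhη z) (hh0 z)
        _ ≤ _ := by rw [← Finset.mul_sum]; exact mul_le_mul_of_nonneg_left hhsum hη0
    have c30 : 0 ≤ ∑ z ∈ S, hh z ^ 2 := Finset.sum_nonneg fun z _ => sq_nonneg _
    have c4 : (∑ z ∈ S, |X' z| * hh z) ^ 2 ≤ (nm X' * Real.sqrt (η * Q)) ^ 2 := by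
      rw [mul_pow, Real.sq_sqrt (c30.trans c3)]
      exact c1.trans (mul_le_mul c2 c3 c30 (sq_nonneg _))
    have c5 : ∑ z ∈ S, |X' z| * hh z ≤ nm X' * Real.sqrt (η * Q) :=
      (le_abs_self _).trans (abs_le_of_sq_le_sq c4 (mul_nonneg (nm_nonneg _) (Real.sqrt_nonneg _)))
    refine c5.trans (mul_le_mul_of_nonneg_right (hβ.trans ?_) (Real.sqrt_nonneg _))
    apply mul_le_mul_of_nonneg_right _ (nm_nonneg _)
    linarith
  have partC : ∑ z ∈ Sᶜ, |X' z| * hh z ≤ e * η := by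
    calc _ ≤ ∑ z ∈ Sᶜ, opi U W z * η := by
          refine Finset.sum_le_sum fun z hz => ?_
          exact mul_le_mul (off z (Finset.mem_compl.1 hz)) (hhη z) (hh0 z)
            (Finset.sum_nonneg fun u _ => mul_nonneg (hU0 u) (W0 _))
      _ ≤ ∑ z, opi U W z * η := Finset.sum_le_sum_of_subset_of_nonneg (Finset.subset_univ _) (fun z _ _ =>
            mul_nonneg (Finset.sum_nonneg fun u _ => mul_nonneg (hU0 u) (W0 _)) hη0)
      _ ≤ e' * η := by rw [← Finset.sum_mul]; exact mul_le_mul_of_nonneg_right sumUW hη0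
      _ ≤ _ := by gcongr
  rw [split]
  refine (abs_add_le _ _).trans ?_
  rw [← Finset.sum_add_sum_compl S] at main_le
  linarith

end grp2
end Disc

namespace Disc

section dec
variable {L : ℕ} {G : Type*} [AddCommGroup G] [Fintype G]

/-- discrete interval -/
def ivs (a : ZL L) (l : ℕ) : Finset (ZL L) := (Finset.range l).image fun i : ℕ => a + (i : ZL L)

theorem mem_ivs {a : ZL L} {l : ℕ} {v : ZL L} : v ∈ ivs a l ↔ ∃ i < l, a + (i : ZL L) = v := by
  simp [ivs]

/-- convolution -/
def cv {A : Type*} [AddCommGroup A] [Fintype A] (a f : A → ℝ) (v : A) : ℝ := ∑ x, a x * f (v - x)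

theorem U_cast_ge (j r : ℕ) (hr : r < 2 ^ j) : (1 / 2 : ℝ) ^ j ≤ U j (r : ZL L) := by
  have : (1 : ℝ) ≤ short (2 ^ j) (r : ZL L) := by
    unfold short
    have := Finset.single_le_sum (f := fun i : ℕ => if (i : ZL L) = (r : ZL L) then (1 : ℝ) else 0)
      (fun i _ => by split_ifs <;> norm_num) (Finset.mem_range.2 hr)
    simpa using this
  unfold U
  simp only [Pi.smul_apply, smul_eq_mul]
  exact le_mul_of_one_le_right (by positivity) this

theorem U_pair (j : ℕ) (z : ZL L) : U j z + U j (z - ((2 ^ j : ℕ) : ZL L)) = 2 * U (j + 1) z := by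
  rw [U_succ]; simp [sh, sub_eq_add_neg]

theorem interval_bound (π : G →+ ZL L) {F : G → ℝ} (hF : IsSP F) (N j : ℕ) (a w : ZL L) :
    (op π F ^ (2 * N)) (ind (ivs a (2 ^ j))) w ≤ 2 * PP π F N j := by
  let tn : ZL L → ℝ := opi (U j) (U j)
  have htn : ∀ w, (op π F ^ (2 * N)) tn w ≤ al π F (U j) N := by
    intro w
    have c : (op π F ^ (2 * N)) tn = opi (U j) ((op π F ^ (2 * N)) (U j)) := by
      have := (op_comm π (AddMonoidHom.id (ZL L)) F (U j)).pow_left (2 * N)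
      exact congrArg (fun T : (ZL L → ℝ) →ₗ[ℝ] (ZL L → ℝ) => T (U j)) this.eq
    rw [c]
    have : opi (U j) ((op π F ^ (2 * N)) (U j)) w = ip ((op π F ^ N) (U j)) (sh w ((op π F ^ N) (U j))) := by
      rw [← pow_sh, pow_symm π hF, pow_pow_apply, ← two_mul, pow_sh]
      simp [opi_apply, ip, sh, add_comm]
    rw [this]
    refine (ip_le _ _).trans ?_
    rw [nm_sh, ← pow_two, nm_sq]; exact le_rfl
  have hpt : ∀ v, ind (ivs a (2 ^ j)) v
      ≤ ((2 : ℝ) ^ j • (sh (-a) tn + sh (-a - ((2 ^ j : ℕ) : ZL L)) tn)) v := by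
    intro v
    have U0 := U_nonneg (L := L) j
    have tn0 : ∀ v, 0 ≤ tn v := fun v => Finset.sum_nonneg fun x _ => mul_nonneg (U0 _) (U0 _)
    simp only [Pi.smul_apply, Pi.add_apply, sh, smul_eq_mul]
    by_cases hv : v ∈ ivs a (2 ^ j)
    · obtain ⟨q, hq, rfl⟩ := mem_ivs.1 hv
      have e0 : tn (a + q + -a) + tn (a + q + (-a - ((2 ^ j : ℕ) : ZL L)))
          = ∑ x, U j x * (2 * U (j + 1) (x + (q : ZL L))) := by
        simp only [tn, opi_apply]
        rw [← Finset.sum_add_distrib]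
        refine Finset.sum_congr rfl fun x _ => ?_
        rw [← U_pair, ← mul_add]
        congr 2
        · congr 1; abel
        · congr 1; abel
      rw [e0, sum_U_mul]
      have e1 : (1 : ℝ) ≤ ∑ i ∈ Finset.range (2 ^ j), 2 * U (j + 1) ((i : ZL L) + (q : ZL L)) := by
        calc (1 : ℝ) = ∑ i ∈ Finset.range (2 ^ j), (1 / 2 : ℝ) ^ j := by
              simp
          _ ≤ _ := by
              refine Finset.sum_le_sum fun i hi => ?_
              have := U_cast_ge (L := L) (j + 1) (i + q) (by
                have := Finset.mem_range.1 hi; rw [pow_succ]; omega)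
              rw [pow_succ] at this
              push_cast at this
              linarith
      have e2 : (2 : ℝ) ^ j * (1 / 2) ^ j = 1 := by rw [← mul_pow]; norm_num
      rw [← mul_assoc, e2, one_mul]
      exact (ind_le_one _ _).trans e1
    · unfold ind; rw [if_neg hv]
      exact mul_nonneg (by positivity) (add_nonneg (tn0 _) (tn0 _))
  refine (pow_mono' π hF (2 * N) hpt w).trans ?_
  rw [map_smul, map_add, pow_sh, pow_sh]
  simp only [Pi.smul_apply, Pi.add_apply, sh, smul_eq_mul]
  unfold PP
  have h1 := htn (w + -a)
  have h2 := htn (w + (-a - ((2 ^ j : ℕ) : ZL L)))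
  have : (0 : ℝ) < 2 ^ j := by positivity
  nlinarith

theorem cv_U (j : ℕ) (f : ZL L → ℝ) (v : ZL L) :
    cv (U j) f v = (1 / 2 : ℝ) ^ j * ∑ i ∈ Finset.range (2 ^ j), f (v - i) :=
  sum_U_mul j (fun x => f (v - x))

theorem cv_U_succ (j : ℕ) (f : ZL L → ℝ) (v : ZL L) :
    cv (U (j + 1)) f v = 1 / 2 * (cv (U j) f v + cv (U j) f (v - ((2 ^ j : ℕ) : ZL L))) := by
  rw [cv_U, cv_U, cv_U, pow_succ 2 j, mul_two, Finset.sum_range_add]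
  have : ∀ i : ℕ, v - ((2 ^ j + i : ℕ) : ZL L) = v - ((2 ^ j : ℕ) : ZL L) - (i : ZL L) := by
    intro i; push_cast; abel
  simp only [this]; ring

theorem cv_U_zero (f : ZL L → ℝ) (v : ZL L) : cv (U 0) f v = f v := by
  rw [cv_U]; simp

theorem avg_factor (j t : ℕ) : ∃ V : (ZL L → ℝ) → (ZL L → ℝ),
    (∀ f v, cv (U (j + t)) f v = cv (U j) (V f) v) ∧
    (∀ f v lo hi, (∀ s : ℕ, s < 2 ^ (j + t) → lo ≤ f (v - s) ∧ f (v - s) ≤ hi) → lo ≤ V f v ∧ V f v ≤ hi) := by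
  induction t with
  | zero =>
    refine ⟨id, fun f v => rfl, fun f v lo hi h => ?_⟩
    have := h 0 (by positivity)
    simpa using this
  | succ t ih =>
    obtain ⟨V, h1, h2⟩ := ih
    refine ⟨fun f v => 1 / 2 * (V f v + V f (v - ((2 ^ (j + t) : ℕ) : ZL L))), fun f v => ?_, fun f v lo hi h => ?_⟩
    · rw [← add_assoc, cv_U_succ, h1, h1]
      simp only [cv]
      rw [← Finset.sum_add_distrib, Finset.mul_sum]
      refine Finset.sum_congr rfl fun x _ => ?_
      rw [sub_right_comm v _ x]; ring
    · have a1 := h2 f v lo hi (fun s hs => h s (by rw [← add_assoc, pow_succ]; omega))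
      have a2 := h2 f (v - ((2 ^ (j + t) : ℕ) : ZL L)) lo hi (fun s hs => by
        have := h (2 ^ (j + t) + s) (by rw [← add_assoc, pow_succ]; omega)
        rw [sub_sub]; push_cast at this ⊢; exact this)
      constructor <;> linarith [a1.1, a1.2, a2.1, a2.2]

/-- one-dimensional multiscale decomposition of an interval -/
theorem decomp1 (π : G →+ ZL L) {F : G → ℝ} (hF : IsSP F) (N : ℕ) (a : ZL L) (l : ℕ) :
    ∃ (jj : ℕ → ℕ) (c : ℕ → ZL L → ℝ) (gt : ℕ → ZL L → ℝ) (B : ℕ → Finset (ZL L)),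
      (∀ i, jj i ≤ L) ∧ (∀ i, (1 / 2 : ℝ) ^ (i + 1) ≤ PP π F N (jj i)) ∧
      (∀ i, ∑ x, |c i x| ≤ 2) ∧
      (∀ i v, |gt i v| ≤ ind (B i) v) ∧
      (∀ i w, (op π F ^ (2 * N)) (ind (B i)) w ≤ 8 * (1 / 2) ^ i) ∧
      (∀ i v, cv (U (jj i)) (gt i) v = cv (c i) (ind (ivs a l)) v) ∧
      (∀ v, ind (ivs a l) v = ∑ i ∈ Finset.range (L + 1), cv (c i) (ind (ivs a l)) v) := by
  classical
  have ex : ∀ i : ℕ, ∃ j, (1 / 2 : ℝ) ^ i ≤ PP π F N j := fun i =>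
    ⟨L, (pow_le_one₀ (by norm_num) (by norm_num)).trans (PP_L π hF N)⟩
  let jf : ℕ → ℕ := fun i => Nat.find (ex i)
  have jf_spec : ∀ i, (1 / 2 : ℝ) ^ i ≤ PP π F N (jf i) := fun i => Nat.find_spec (ex i)
  have jf_min : ∀ i j, (1 / 2 : ℝ) ^ i ≤ PP π F N j → jf i ≤ j := fun i j h => Nat.find_min' (ex i) h
  have jf_le : ∀ i, jf i ≤ L := fun i => jf_min i L ((pow_le_one₀ (by norm_num) (by norm_num)).trans (PP_L π hF N))
  have jf_anti : ∀ i, jf (i + 1) ≤ jf i := fun i => jf_min _ _ (le_trans (by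
    rw [pow_succ]; have : (0 : ℝ) < (1 / 2) ^ i := by positivity
    linarith) (jf_spec i))
  have jf_last : jf (L + 1) = 0 := by
    have : ∀ j, PP π F N j ≤ 2 ^ j * PP π F N 0 := by
      intro j
      induction j with
      | zero => simp
      | succ j ih => have := PP_succ_le π F N j; rw [pow_succ]; linarith
    have h1 := (PP_L π hF N).trans (this L)
    apply Nat.le_zero.1
    apply jf_min
    have h2 : (1 / 2 : ℝ) ^ L ≤ PP π F N 0 := by
      have := mul_le_mul_of_nonneg_left h1 (show (0 : ℝ) ≤ (1 / 2) ^ L by positivity)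
      rw [← mul_assoc, ← mul_pow] at this
      norm_num at this ⊢; exact this
    rw [pow_succ]; have : (0 : ℝ) < (1 / 2) ^ L := by positivity
    linarith
  set I := ivs a l with hI
  let c : ℕ → ZL L → ℝ := fun i => if i = 0 then U (jf 1) else U (jf (i + 1)) - U (jf i)
  have main : ∀ i, ∃ (gt : ZL L → ℝ) (B : Finset (ZL L)), (∀ v, |gt v| ≤ ind B v) ∧
      (∀ w, (op π F ^ (2 * N)) (ind B) w ≤ 8 * (1 / 2) ^ i) ∧
      (∀ v, cv (U (jf (i + 1))) gt v = cv (c i) (ind I) v) := by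
    intro i
    by_cases hi : i = 0
    · subst hi
      refine ⟨ind I, Finset.univ, fun v => ?_, fun w => ?_, fun v => ?_⟩
      · rw [abs_of_nonneg (ind_nonneg _ _)]
        simpa [ind] using ind_le_one I v
      · refine (pow_le_const π hF _ (ind_le_one _) w).trans ?_
        norm_num
      · simp [c]
    have hci : ∀ v, cv (c i) (ind I) v = cv (U (jf (i + 1))) (ind I) v - cv (U (jf i)) (ind I) v := by
      intro v; simp [c, hi, cv, sub_mul]
    by_cases hj : jf i = jf (i + 1)
    · refine ⟨0, ∅, fun v => ?_, fun w => ?_, fun v => ?_⟩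
      · simp [ind]
      · refine (pow_le_const π hF (2 * N) (c := 0) (fun v => ?_) w).trans (by positivity)
        simp [ind]
      · rw [hci, hj]; simp [cv]
    have hlt : jf (i + 1) < jf i := lt_of_le_of_ne (jf_anti i) (Ne.symm hj)
    obtain ⟨t, ht⟩ : ∃ t, jf i = jf (i + 1) + t := ⟨jf i - jf (i + 1), by omega⟩
    obtain ⟨V, hV1, hV2⟩ := avg_factor (L := L) (jf (i + 1)) t
    rw [← ht] at hV1 hV2
    set j := jf i with hjdef
    have hPj : PP π F N j ≤ 2 * (1 / 2) ^ i := by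
      obtain ⟨j0, hj0⟩ : ∃ j0, j = j0 + 1 := ⟨j - 1, by omega⟩
      have h1 : ¬ (1 / 2 : ℝ) ^ i ≤ PP π F N j0 := by
        intro h; have := jf_min i j0 h; omega
      have h2 := PP_succ_le π F N j0
      rw [← hj0] at h2
      push Not at h1
      linarith
    refine ⟨fun v => ind I v - V (ind I) v, ivs a (2 ^ j) ∪ ivs (a + (l : ZL L)) (2 ^ j), fun v => ?_, fun w => ?_, fun v => ?_⟩
    · by_cases hv : v ∈ ivs a (2 ^ j) ∪ ivs (a + (l : ZL L)) (2 ^ j)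
      · have : ind (ivs a (2 ^ j) ∪ ivs (a + (l : ZL L)) (2 ^ j)) v = 1 := if_pos hv
        rw [this, abs_le]
        have h1 := hV2 (ind I) v 0 1 (fun s _ => ⟨ind_nonneg _ _, ind_le_one _ _⟩)
        have h2 := ind_nonneg I v
        have h3 := ind_le_one I v
        constructor <;> linarith [h1.1, h1.2]
      · have : ind (ivs a (2 ^ j) ∪ ivs (a + (l : ZL L)) (2 ^ j)) v = 0 := if_neg hv
        rw [this]
        have hconst : ∀ s : ℕ, s < 2 ^ j → ind I (v - s) = ind I v := by
          intro s hs
          rw [Finset.mem_union, not_or] at hv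
          have : v - (s : ZL L) ∈ I ↔ v ∈ I := by
            constructor
            · intro h
              obtain ⟨q, hq, hqe⟩ := mem_ivs.1 h
              have hvq : v = a + (q : ZL L) + s := by rw [hqe]; abel
              by_contra hvI
              by_cases hql : q + s < l
              · exact hvI (mem_ivs.2 ⟨q + s, hql, by rw [hvq]; push_cast; abel⟩)
              · apply hv.2
                refine mem_ivs.2 ⟨q + s - l, by omega, ?_⟩
                rw [Nat.cast_sub (by omega), hvq]; push_cast; abel
            · intro h
              obtain ⟨q, hq, rfl⟩ := mem_ivs.1 h
              by_cases hqs : s ≤ q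
              · refine mem_ivs.2 ⟨q - s, by omega, ?_⟩
                rw [Nat.cast_sub hqs]; abel
              · exact absurd (mem_ivs.2 ⟨q, by omega, rfl⟩) hv.1
          simp only [ind, this]
        have h1 := hV2 (ind I) v (ind I v) (ind I v) (fun s hs => by rw [hconst s hs]; exact ⟨le_rfl, le_rfl⟩)
        have : ind I v - V (ind I) v = 0 := by linarith [h1.1, h1.2]
        show |ind I v - V (ind I) v| ≤ 0
        rw [this, abs_zero]
    · have h1 := interval_bound π hF N j a w
      have h2 := interval_bound π hF N j (a + (l : ZL L)) w
      have h3 : (op π F ^ (2 * N)) (ind (ivs a (2 ^ j) ∪ ivs (a + (l : ZL L)) (2 ^ j))) w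
          ≤ (op π F ^ (2 * N)) (ind (ivs a (2 ^ j)) + ind (ivs (a + (l : ZL L)) (2 ^ j))) w := by
        apply pow_mono' π hF
        intro v
        simp only [ind, Finset.mem_union, Pi.add_apply]
        split_ifs with h h1 h2 h2 <;> norm_num
        tauto
      rw [map_add, Pi.add_apply] at h3
      linarith
    · rw [hci, hV1]
      simp only [cv]
      rw [← Finset.sum_sub_distrib]
      exact Finset.sum_congr rfl fun x _ => by ring
  choose gt B hg1 hg2 hg3 using main
  refine ⟨fun i => jf (i + 1), c, gt, B, fun i => jf_le _, fun i => jf_spec _, fun i => ?_, hg1, hg2, hg3, fun v => ?_⟩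
  · have hUabs : ∀ j, ∑ x : ZL L, |U j x| = 1 := by
      intro j; rw [← sum_U (L := L) j]
      exact Finset.sum_congr rfl fun x _ => abs_of_nonneg (U_nonneg _ _)
    by_cases hi : i = 0
    · simp only [c, hi, if_true]; rw [hUabs]; norm_num
    · simp only [c, hi, if_false, Pi.sub_apply]
      calc ∑ x, |U (jf (i + 1)) x - U (jf i) x| ≤ ∑ x, (|U (jf (i + 1)) x| + |U (jf i) x|) :=
            Finset.sum_le_sum fun x _ => abs_sub _ _
        _ = 2 := by rw [Finset.sum_add_distrib, hUabs, hUabs]; norm_num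
  · have tel : ∀ M, ∑ i ∈ Finset.range (M + 1), cv (c i) (ind I) v = cv (U (jf (M + 1))) (ind I) v := by
      intro M
      induction M with
      | zero => simp [c]
      | succ M ih =>
        rw [Finset.sum_range_succ, ih]
        have : c (M + 1) = U (jf (M + 1 + 1)) - U (jf (M + 1)) := by simp [c]
        rw [this]
        simp [cv, sub_mul]
    rw [tel, jf_last, cv_U_zero]

end dec
end Disc

namespace Disc

section multi
variable {L m : ℕ}

theorem sum_prod_pi (f : Fin m → ZL L → ℝ) :
    ∑ v : Fin m → ZL L, ∏ r, f r (v r) = ∏ r, ∑ x, f r x := by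
  rw [Finset.prod_univ_sum]; simp

/-- coordinate homs -/
abbrev ev (L : ℕ) {m : ℕ} (r : Fin m) : (Fin m → ZL L) →+ ZL L := Pi.evalAddMonoidHom (fun _ => ZL L) r

theorem opi_eval (a : (Fin m → ZL L) → ℝ) (r : Fin m) (f : ZL L → ℝ) :
    opi a (fun v => f (v r)) = fun v => op (ev L r) a f (v r) := rfl

theorem pow_eval (F : (Fin m → ZL L) → ℝ) (r : Fin m) (n : ℕ) (f : ZL L → ℝ) (v : Fin m → ZL L) :
    (opi F ^ n) (fun v => f (v r)) v = (op (ev L r) F ^ n) f (v r) := by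
  rw [← op_pw, ← op_pw]; rfl

theorem one_sub_prod_le {ι : Type*} (s : Finset ι) (f : ι → ℝ) (h0 : ∀ i, 0 ≤ f i) (h1 : ∀ i, f i ≤ 1) :
    1 - ∏ i ∈ s, f i ≤ ∑ i ∈ s, (1 - f i) := by
  classical
  induction s using Finset.induction_on with
  | empty => simp
  | insert a s ha ih =>
    rw [Finset.prod_insert ha, Finset.sum_insert ha]
    have hp : ∏ i ∈ s, f i ≤ 1 := Finset.prod_le_one (fun i _ => h0 i) (fun i _ => h1 i)
    nlinarith [h0 a, h1 a]

theorem blockM {F : (Fin m → ZL L) → ℝ} (hF : IsSP F) (N : ℕ) (hN : 0 < N)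
    (ii jj : Fin m → ℕ) (gt : Fin m → ZL L → ℝ) (B : Fin m → Finset (ZL L))
    (hjL : ∀ r, jj r ≤ L) (hP : ∀ r, (1 / 2 : ℝ) ^ (ii r + 1) ≤ PP (ev L r) F N (jj r))
    (hgt : ∀ r v, |gt r v| ≤ ind (B r) v)
    (hB : ∀ r w, (op (ev L r) F ^ (2 * N)) (ind (B r)) w ≤ 8 * (1 / 2) ^ (ii r))
    (M : ℕ) (hM : ∀ r, ii r ≤ M) (r0 : Fin m) (hr0 : ii r0 = M)
    (g : (Fin m → ZL L) → ℝ) (hg : g = fun v => ∏ r, cv (U (jj r)) (gt r) (v r))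
    (e : ℝ) (he : (m : ℝ) * (819200000 * 1.21 ^ M / N) ≤ e)
    (n0 σ : ℕ) (hn0 : 2 * N ≤ n0) (M' : ℝ) (hM' : ∀ w, |(opi F ^ n0) (g - (opi F ^ 2) g) w| ≤ M')
    (w0 : Fin m → ZL L) :
    |(opi F ^ (n0 + 2 * σ)) (g - (opi F ^ 2) g) w0|
      ≤ (2 / ((σ : ℝ) + 1) + 2 * e) * (2 ^ (15 * m + 2) * 0.71 ^ M) + e * (8 * 0.71 ^ M) + σ * e * M' := by
  classical
  have hb := fun r => block1 (ev L r) hF N hN (jj r) (ii r) (hjL r) (hP r)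
  choose φ S hφ0 hφ1 hφe hφS hSB using hb
  let Φ : (Fin m → ZL L) → ℝ := fun v => ∏ r, φ r (v r)
  let UU : (Fin m → ZL L) → ℝ := fun v => ∏ r, U (jj r) (v r)
  have e0 : 0 ≤ e := le_trans (by positivity) he
  have KKp : ∀ y, KK Φ y = ∏ r, KK (φ r) (y r) := by
    intro y
    have := sum_prod_pi (fun r x => φ r x * φ r (x + y r))
    unfold KK ip sh
    rw [← this]
    refine Finset.sum_congr rfl fun v _ => ?_
    rw [Finset.prod_mul_distrib]; rfl
  have ipΦ : ip Φ Φ = 1 := by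
    have := KKp 0
    unfold KK at this
    rw [sh_zero] at this
    rw [this]
    apply Finset.prod_eq_one
    intro r _
    rw [Pi.zero_apply, sh_zero, hφ1]
  have hη : ∀ w, (opi F ^ n0) (ind (Fintype.piFinset B)) w ≤ 8 * (1 / 2) ^ M := by
    intro w
    have h1 : ∀ v, ind (Fintype.piFinset B) v ≤ (fun v : Fin m → ZL L => ind (B r0) (v r0)) v := by
      intro v
      by_cases hv : v ∈ Fintype.piFinset B
      · have := Fintype.mem_piFinset.1 hv r0
        simp [ind, hv, this]
      · simp only [ind, hv, if_false]; split_ifs <;> norm_num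
    refine (pow_mono' _ hF n0 h1 w).trans ?_
    show (opi F ^ n0) _ w ≤ _
    rw [pow_eval, show n0 = (n0 - 2 * N) + 2 * N by omega, pow_add, Module.End.mul_apply, ← hr0]
    exact pow_le_const _ hF _ (hB r0) _
  have main := blockG hF (φ := Φ) (fun v => Finset.prod_nonneg fun r _ => hφ0 r _) ipΦ e ?_ UU
    (fun v => Finset.prod_nonneg fun r _ => U_nonneg _ _) ?_
    (fun v => ∏ r, gt r (v r)) (Fintype.piFinset B) ?_ n0 σ (8 * (1 / 2) ^ M) hη
    (Fintype.piFinset S) ?_ (∏ r, (2 ^ 29 * 2 ^ (jj r))) ?_ g ?_ M' hM' w0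
  · refine main.trans ?_
    have c1 : nm UU * Real.sqrt (8 * (1 / 2) ^ M * ∏ r, (2 ^ 29 * 2 ^ (jj r))) ≤ 2 ^ (15 * m + 2) * 0.71 ^ M := by
      unfold nm
      rw [← Real.sqrt_mul (ip_self_nonneg _)]
      apply Real.sqrt_le_iff.2
      refine ⟨by positivity, ?_⟩
      have hU : ip UU UU ≤ ∏ r, (1 / 2 : ℝ) ^ (jj r) := by
        have := sum_prod_pi (fun r x => U (jj r) x * U (jj r) (x : ZL L))
        have h2 : ip UU UU = ∏ r, ip (U (jj r) : ZL L → ℝ) (U (jj r)) := by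
          unfold ip
          rw [← this]
          refine Finset.sum_congr rfl fun v _ => ?_
          rw [Finset.prod_mul_distrib]
        rw [h2]
        exact Finset.prod_le_prod (fun r _ => ip_self_nonneg _) (fun r _ => ip_U_le (hjL r))
      calc ip UU UU * (8 * (1 / 2) ^ M * ∏ r, (2 ^ 29 * 2 ^ (jj r)))
          ≤ (∏ r, (1 / 2 : ℝ) ^ (jj r)) * (8 * (1 / 2) ^ M * ∏ r, (2 ^ 29 * 2 ^ (jj r))) := by
            apply mul_le_mul_of_nonneg_right hU
            have : (0 : ℝ) ≤ ∏ r : Fin m, (2 ^ 29 * 2 ^ (jj r)) := Finset.prod_nonneg fun r _ => by positivity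
            positivity
        _ = 8 * (1 / 2) ^ M * ∏ r : Fin m, ((1 / 2 : ℝ) ^ (jj r) * (2 ^ 29 * 2 ^ (jj r))) := by
            have h9 := Finset.prod_mul_distrib (s := (Finset.univ : Finset (Fin m))) (f := fun r => (1 / 2 : ℝ) ^ (jj r)) (g := fun r => (2 ^ 29 * 2 ^ (jj r) : ℝ))
            rw [h9]; ring
        _ = 8 * (1 / 2) ^ M * (2 ^ 29) ^ m := by
            congr 1
            have : ∀ r : Fin m, ((1 / 2 : ℝ) ^ (jj r) * (2 ^ 29 * 2 ^ (jj r))) = 2 ^ 29 := by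
              intro r
              have : (1 / 2 : ℝ) ^ (jj r) * 2 ^ (jj r) = 1 := by rw [← mul_pow]; norm_num
              calc _ = ((1 / 2 : ℝ) ^ (jj r) * 2 ^ (jj r)) * 2 ^ 29 := by ring
                _ = _ := by rw [this, one_mul]
            simp only [this]; simp
        _ ≤ 16 * (0.71 ^ 2) ^ M * (2 ^ 30) ^ m := by gcongr <;> norm_num
        _ = _ := by
            rw [mul_pow, ← pow_mul, ← pow_mul, ← pow_mul, ← pow_mul, show (15 * m + 2) * 2 = 30 * m + 4 by ring, pow_add]
            ring
    have c2 : (1 / 2 : ℝ) ^ M ≤ 0.71 ^ M := by gcongr; norm_num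
    have hb0 : 0 ≤ (2 / ((σ : ℝ) + 1) + 2 * e) := by positivity
    have c3 := mul_le_mul_of_nonneg_left c1 hb0
    have c4 : e * (8 * (1 / 2) ^ M) ≤ e * (8 * 0.71 ^ M) := by gcongr
    rw [mul_assoc (2 / ((σ : ℝ) + 1) + 2 * e)]
    linarith
  · -- e
    refine le_trans ?_ he
    have p2 := pw_sp hF 2
    calc ∑ y, pw F 2 y * (1 - KK Φ y) ≤ ∑ y, pw F 2 y * ∑ r, (1 - KK (φ r) (y r)) := by
          refine Finset.sum_le_sum fun y _ => mul_le_mul_of_nonneg_left ?_ (p2.nonneg y)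
          rw [KKp]
          exact one_sub_prod_le _ (fun r => KK (φ r) (y r)) (fun r => KK_nonneg (hφ0 r) _) (fun r => KK_le (hφ1 r) _)
      _ = ∑ r, ∑ y, pw F 2 y * (1 - KK (φ r) (y r)) := by
          simp only [Finset.mul_sum]; rw [Finset.sum_comm]
      _ ≤ ∑ r : Fin m, (819200000 * 1.21 ^ M / N : ℝ) := by
          refine Finset.sum_le_sum fun r _ => (hφe r).trans ?_
          have : (1.21 : ℝ) ^ (ii r) ≤ 1.21 ^ M := pow_le_pow_right₀ (by norm_num) (hM r)
          gcongr
      _ = _ := by simp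
  · have := sum_prod_pi (fun r => (U (jj r) : ZL L → ℝ))
    rw [this]
    exact Finset.prod_eq_one fun r _ => sum_U _
  · intro v
    by_cases hv : v ∈ Fintype.piFinset B
    · rw [Finset.abs_prod]
      have : ind (Fintype.piFinset B) v = 1 := if_pos hv
      rw [this]
      exact Finset.prod_le_one (fun r _ => abs_nonneg _) (fun r _ => (hgt r _).trans (ind_le_one _ _))
    · have h0 : ind (Fintype.piFinset B) v = 0 := if_neg hv
      rw [h0]
      have : ∃ r, v r ∉ B r := by
        by_contra! hcon
        exact hv (Fintype.mem_piFinset.2 hcon)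
      obtain ⟨r, hr⟩ := this
      have hz : gt r (v r) = 0 := by
        have := hgt r (v r)
        rw [show ind (B r) (v r) = 0 from if_neg hr] at this
        exact abs_nonpos_iff.1 this
      rw [Finset.prod_eq_zero (Finset.mem_univ r) hz, abs_zero]
  · intro v v' w w' u hv hv' hw hw' hu
    refine Fintype.mem_piFinset.2 fun r => ?_
    have n1 : ∀ v, Φ v ≠ 0 → φ r (v r) ≠ 0 := fun v h => Finset.prod_ne_zero_iff.1 h r (Finset.mem_univ r)
    have n2 : U (jj r) (u r) ≠ 0 := Finset.prod_ne_zero_iff.1 hu r (Finset.mem_univ r)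
    have : ∃ t : ℕ, t < 2 ^ (jj r) ∧ (t : ZL L) = u r := by
      by_contra! hcon
      apply n2
      have : short (2 ^ (jj r)) (u r) = 0 := by
        apply Finset.sum_eq_zero
        intro i hi
        exact if_neg (hcon i (Finset.mem_range.1 hi))
      simp [U, this]
    obtain ⟨t, ht, htu⟩ := this
    have := hφS r (v r) (v' r) (w r) (w' r) t ht (n1 v hv) (n1 v' hv') (n1 w hw) (n1 w' hw')
    simpa [← htu] using this
  · intro x
    have h1 : ∀ z : Fin m → ZL L, ind (Fintype.piFinset B) (x + z) ≤ ∏ r, ind (B r) (x r + z r) := by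
      intro z
      by_cases hz : x + z ∈ Fintype.piFinset B
      · have := Fintype.mem_piFinset.1 hz
        apply le_of_eq
        rw [show ind (Fintype.piFinset B) (x + z) = 1 from if_pos hz, eq_comm]
        exact Finset.prod_eq_one fun r _ => if_pos (this r)
      · rw [show ind (Fintype.piFinset B) (x + z) = 0 from if_neg hz]
        exact Finset.prod_nonneg fun r _ => ind_nonneg _ _
    calc ∑ z ∈ Fintype.piFinset S, ind (Fintype.piFinset B) (x + z)
        ≤ ∑ z ∈ Fintype.piFinset S, ∏ r, ind (B r) (x r + z r) := Finset.sum_le_sum fun z _ => h1 z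
      _ = ∏ r, ∑ z ∈ S r, ind (B r) (x r + z) := by rw [Finset.prod_univ_sum]
      _ ≤ _ := by
          apply Finset.prod_le_prod
          · intro r _; exact Finset.sum_nonneg fun z _ => ind_nonneg _ _
          · intro r _
            let B' := Finset.univ.filter fun z => x r + z ∈ B r
            have h2 : ∑ z ∈ S r, ind (B r) (x r + z) = ((S r ∩ B').card : ℝ) := by
              have : S r ∩ B' = (S r).filter fun z => x r + z ∈ B r := by
                ext z; simp [B']
              rw [this]; simp [ind]
            have h3 : ind B' = sh (x r) (ind (B r)) := by
              funext z; simp [ind, B', sh, add_comm]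
            rw [h2]
            refine (hSB r B' (8 * (1 / 2) ^ (ii r)) (fun w => ?_)).trans_eq ?_
            · rw [h3, pow_sh]; exact hB r _
            · have : (2 : ℝ) ^ (ii r) * (1 / 2) ^ (ii r) = 1 := by rw [← mul_pow]; norm_num
              calc (2 : ℝ) ^ 26 * 2 ^ (ii r) * (8 * (1 / 2) ^ (ii r)) * 2 ^ (jj r)
                  = 2 ^ 29 * ((2 : ℝ) ^ (ii r) * (1 / 2) ^ (ii r)) * 2 ^ (jj r) := by ring
                _ = _ := by rw [this, mul_one]
  · rw [hg]
    funext v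
    have := sum_prod_pi (fun r x => U (jj r) x * gt r (v r - x))
    unfold cv
    rw [← this]
    refine Finset.sum_congr rfl fun u _ => ?_
    rw [Finset.prod_mul_distrib]; rfl

end multi
end Disc

namespace Disc

section gen
variable {G A : Type*} [AddCommGroup G] [Fintype G] [AddCommGroup A] [Fintype A]

theorem cv_eq (c f : A → ℝ) : cv c f = ∑ x, c x • sh (-x) f := by
  funext v
  simp [cv, sh, sub_eq_add_neg]

theorem pow_cv (π : G →+ A) (a : G → ℝ) (c f : A → ℝ) (n : ℕ) :
    (op π a ^ n) (cv c f) = cv c ((op π a ^ n) f) := by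
  rw [cv_eq, cv_eq, map_sum]
  refine Finset.sum_congr rfl fun x _ => ?_
  rw [map_smul, pow_sh]

theorem abs_cv_le (c f : A → ℝ) (M : ℝ) (hf : ∀ v, |f v| ≤ M) (v : A) :
    |cv c f v| ≤ (∑ x, |c x|) * M := by
  unfold cv
  refine (Finset.abs_sum_le_sum_abs _ _).trans ?_
  rw [Finset.sum_mul]
  refine Finset.sum_le_sum fun x _ => ?_
  rw [abs_mul]
  exact mul_le_mul_of_nonneg_left (hf _) (abs_nonneg _)

theorem cv_sub (c f g : A → ℝ) : cv c (f - g) = cv c f - cv c g := by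
  funext v; simp [cv, mul_sub]

theorem pow_abs_le (π : G →+ A) {F : G → ℝ} (hF : IsSP F) (n : ℕ) {f g : A → ℝ} (h : ∀ v, |f v| ≤ g v) (v : A) :
    |(op π F ^ n) f v| ≤ (op π F ^ n) g v := by
  rw [abs_le]
  constructor
  · have := pow_mono' π hF n (f := -g) (g := f) (fun v => (abs_le.1 (h v)).1) v
    rw [map_neg] at this
    exact this
  · exact pow_mono' π hF n (fun v => (abs_le.1 (h v)).2) v

end gen

section asm
variable {L m : ℕ}

theorem trivB {F : (Fin m → ZL L) → ℝ} (hF : IsSP F) (N : ℕ)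
    (jj : Fin m → ℕ) (gt : Fin m → ZL L → ℝ) (B : Fin m → Finset (ZL L))
    (hgt : ∀ r v, |gt r v| ≤ ind (B r) v)
    (M : ℕ) (r0 : Fin m) 
    (hB : ∀ w, (op (ev L r0) F ^ (2 * N)) (ind (B r0)) w ≤ 8 * (1 / 2) ^ M)
    (g : (Fin m → ZL L) → ℝ) (hg : g = fun v => ∏ r, cv (U (jj r)) (gt r) (v r))
    (n0 : ℕ) (hn0 : 2 * N ≤ n0) (w : Fin m → ZL L) :
    |(opi F ^ n0) (g - (opi F ^ 2) g) w| ≤ 16 * (1 / 2) ^ M := by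
  have h1 : ∀ r x, |cv (U (jj r)) (gt r) x| ≤ 1 := by
    intro r x
    have := abs_cv_le (U (jj r)) (gt r) 1 (fun v => (hgt r v).trans (ind_le_one _ _)) x
    have hs : ∑ x : ZL L, |U (jj r) x| = 1 := by
      simp only [abs_of_nonneg (U_nonneg _ _)]; exact sum_U _
    rwa [hs, one_mul] at this
  have h2 : ∀ v, |g v| ≤ (fun v : Fin m → ZL L => cv (U (jj r0)) (ind (B r0)) (v r0)) v := by
    intro v
    have ha : |cv (U (jj r0)) (gt r0) (v r0)| ≤ cv (U (jj r0)) (ind (B r0)) (v r0) := by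
      unfold cv
      refine (Finset.abs_sum_le_sum_abs _ _).trans (Finset.sum_le_sum fun x _ => ?_)
      rw [abs_mul, abs_of_nonneg (U_nonneg _ _)]
      exact mul_le_mul_of_nonneg_left (hgt _ _) (U_nonneg _ _)
    refine le_trans ?_ ha
    rw [hg]
    show |∏ r, _| ≤ _
    rw [Finset.abs_prod, ← Finset.mul_prod_erase _ _ (Finset.mem_univ r0)]
    exact mul_le_of_le_one_right (abs_nonneg _) (Finset.prod_le_one (fun r _ => abs_nonneg _) (fun r _ => h1 r _))
  have h3 : ∀ k, 2 * N ≤ k → |(opi F ^ k) g w| ≤ 8 * (1 / 2) ^ M := by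
    intro k hk
    refine (pow_abs_le _ hF k h2 w).trans ?_
    show (opi F ^ k) _ w ≤ _
    rw [pow_eval, pow_cv]
    have h4 : ∀ v, |(op (ev L r0) F ^ k) (ind (B r0)) v| ≤ 8 * (1 / 2) ^ M := by
      intro v
      rw [abs_of_nonneg (pow_nonneg' _ hF k (fun v => ind_nonneg _ _) v)]
      rw [show k = (k - 2 * N) + 2 * N by omega, pow_add, Module.End.mul_apply]
      exact pow_le_const _ hF _ hB _
    have := abs_cv_le (U (jj r0)) _ _ h4 (w r0)
    have hs : ∑ x : ZL L, |U (jj r0) x| = 1 := by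
      simp only [abs_of_nonneg (U_nonneg _ _)]; exact sum_U _
    rw [hs, one_mul] at this
    exact (le_abs_self _).trans this
  have e : (opi F ^ n0) (g - (opi F ^ 2) g) w = (opi F ^ n0) g w - (opi F ^ (n0 + 2)) g w := by
    rw [map_sub, pow_add, Module.End.mul_apply]; rfl
  rw [e]
  have a1 := h3 n0 hn0
  have a2 := h3 (n0 + 2) (by omega)
  have := abs_sub ((opi F ^ n0) g w) ((opi F ^ (n0 + 2)) g w)
  linarith

theorem iterB {F : (Fin m → ZL L) → ℝ} (hF : IsSP F) (N : ℕ) (hN : 0 < N)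
    (ii jj : Fin m → ℕ) (gt : Fin m → ZL L → ℝ) (B : Fin m → Finset (ZL L))
    (hjL : ∀ r, jj r ≤ L) (hP : ∀ r, (1 / 2 : ℝ) ^ (ii r + 1) ≤ PP (ev L r) F N (jj r))
    (hgt : ∀ r v, |gt r v| ≤ ind (B r) v)
    (hB : ∀ r w, (op (ev L r) F ^ (2 * N)) (ind (B r)) w ≤ 8 * (1 / 2) ^ (ii r))
    (M : ℕ) (hM : ∀ r, ii r ≤ M) (r0 : Fin m) (hr0 : ii r0 = M)
    (g : (Fin m → ZL L) → ℝ) (hg : g = fun v => ∏ r, cv (U (jj r)) (gt r) (v r))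
    (e : ℝ) (he : (m : ℝ) * (819200000 * 1.21 ^ M / N) ≤ e)
    (n0 σ : ℕ) (hn0 : 2 * N ≤ n0) (hσ : σ * e ≤ 1 / 2) (M' : ℝ)
    (hM' : ∀ w, |(opi F ^ n0) (g - (opi F ^ 2) g) w| ≤ M') (k : ℕ)
    (w0 : Fin m → ZL L) :
    |(opi F ^ (n0 + 2 * σ * k)) (g - (opi F ^ 2) g) w0|
      ≤ 2 * ((2 / ((σ : ℝ) + 1) + 2 * e) * (2 ^ (15 * m + 2) * 0.71 ^ M) + e * (8 * 0.71 ^ M)) + (1 / 2) ^ k * M' := by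
  have e0 : 0 ≤ e := le_trans (by positivity) he
  have M0 : 0 ≤ M' := (abs_nonneg _).trans (hM' w0)
  set b := (2 / ((σ : ℝ) + 1) + 2 * e) * (2 ^ (15 * m + 2) * 0.71 ^ M) + e * (8 * 0.71 ^ M) with hb
  have b0 : 0 ≤ b := by positivity
  induction k generalizing w0 with
  | zero => simpa using (hM' w0).trans (by linarith)
  | succ k ih =>
    have := blockM hF N hN ii jj gt B hjL hP hgt hB M hM r0 hr0 g hg e he (n0 + 2 * σ * k) σ (by omega) _ ih w0
    rw [show n0 + 2 * σ * (k + 1) = n0 + 2 * σ * k + 2 * σ by ring]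
    refine this.trans ?_
    have h2 : σ * e * (2 * b + (1 / 2) ^ k * M') ≤ 1 / 2 * (2 * b + (1 / 2) ^ k * M') := by
      gcongr
    rw [← hb, pow_succ]
    linarith

/-- box indicator -/
def Box (a : Fin m → ZL L) (l : Fin m → ℕ) (v : Fin m → ZL L) : ℝ := ∏ r, ind (ivs (a r) (l r)) (v r)

theorem Box_nonneg (a : Fin m → ZL L) (l : Fin m → ℕ) (v : Fin m → ZL L) : 0 ≤ Box a l v :=
  Finset.prod_nonneg fun r _ => ind_nonneg _ _

theorem Box_le_one (a : Fin m → ZL L) (l : Fin m → ℕ) (v : Fin m → ZL L) : Box a l v ≤ 1 :=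
  Finset.prod_le_one (fun r _ => ind_nonneg _ _) fun r _ => ind_le_one _ _

theorem prod_cv (c f : Fin m → ZL L → ℝ) :
    (fun v : Fin m → ZL L => ∏ r, cv (c r) (f r) (v r)) = cv (fun x => ∏ r, c r (x r)) (fun v => ∏ r, f r (v r)) := by
  funext v
  unfold cv
  rw [← sum_prod_pi (fun r x => c r x * f r (v r - x))]
  refine Finset.sum_congr rfl fun x _ => ?_
  rw [Finset.prod_mul_distrib]; rfl

/-- bound for one multi-index -/
theorem oneIdx {F : (Fin m → ZL L) → ℝ} (hF : IsSP F) (n : ℕ) (hn : 8 ≤ n)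
    (a : Fin m → ZL L) (l : Fin m → ℕ)
    (A Cs : ℝ) (hA : (m : ℝ) * 819200000 * 8 ≤ A) (hA2 : 2 ≤ A) (hC : 0 ≤ Cs)
    (IH : ∀ n1, 0 < n1 → n1 < n → ∀ w, |(opi F ^ n1) (Box a l - (opi F ^ 2) (Box a l)) w| ≤ Cs / n1)
    (ii jj : Fin m → ℕ) (c gt : Fin m → ZL L → ℝ) (B : Fin m → Finset (ZL L))
    (hjL : ∀ r, jj r ≤ L) (hP : ∀ r, (1 / 2 : ℝ) ^ (ii r + 1) ≤ PP (ev L r) F (n / 4) (jj r))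
    (hc : ∀ r, ∑ x, |c r x| ≤ 2)
    (hgt : ∀ r v, |gt r v| ≤ ind (B r) v)
    (hB : ∀ r w, (op (ev L r) F ^ (2 * (n / 4))) (ind (B r)) w ≤ 8 * (1 / 2) ^ (ii r))
    (M : ℕ) (hM : ∀ r, ii r ≤ M) (r0 : Fin m) (hr0 : ii r0 = M)
    (g : (Fin m → ZL L) → ℝ) (hg : g = fun v => ∏ r, cv (U (jj r)) (gt r) (v r))
    (hg2 : g = fun v => ∏ r, cv (c r) (ind (ivs (a r) (l r))) (v r)) (w : Fin m → ZL L) :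
    |(opi F ^ n) (g - (opi F ^ 2) g) w| ≤ (28 * A * 2 ^ (15 * m + 2) + 2 ^ (m + 2) * Cs / A) / n * 0.86 ^ M := by
  have n0 : (0 : ℝ) < n := by exact_mod_cast (by omega : 0 < n)
  have A0 : 0 < A := by linarith
  have P1 : (4 : ℝ) ≤ 2 ^ (15 * m + 2) := by
    rw [pow_add]
    have : (1 : ℝ) ≤ 2 ^ (15 * m) := one_le_pow₀ (by norm_num)
    linarith
  set P : ℝ := 2 ^ (15 * m + 2)
  set x : ℝ := 1.21 ^ M with hx
  have x1 : 1 ≤ x := one_le_pow₀ (by norm_num)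
  have hx71 : x * 0.71 ^ M ≤ 0.86 ^ M := by
    rw [hx, ← mul_pow]; gcongr; norm_num
  have hx5 : x * (1 / 2) ^ M ≤ 0.86 ^ M := by
    rw [hx, ← mul_pow]; gcongr; norm_num
  have hxi : 1 / x ≤ 0.86 ^ M := by
    rw [hx, ← one_div_pow]; gcongr; norm_num
  have Ax : 2 ≤ A * x := by nlinarith
  obtain ⟨σ, hσd⟩ : ∃ σ, σ = ⌊(n : ℝ) / (2 * (A * x))⌋₊ := ⟨_, rfl⟩
  have s1 : (σ : ℝ) ≤ n / (2 * (A * x)) := by rw [hσd]; exact Nat.floor_le (by positivity)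
  have s2 : (n : ℝ) / (2 * (A * x)) < σ + 1 := by rw [hσd]; exact Nat.lt_floor_add_one _
  have s2' : (n : ℝ) < (σ + 1) * (2 * (A * x)) := (div_lt_iff₀ (by positivity)).1 s2
  have s1' : (σ : ℝ) * (2 * (A * x)) ≤ n := (le_div_iff₀ (by positivity)).1 s1
  have main2 : 28 * A * P / n * 0.86 ^ M ≤ (28 * A * P + 2 ^ (m + 2) * Cs / A) / n * 0.86 ^ M := by
    gcongr
    have : 0 ≤ 2 ^ (m + 2) * Cs / A := by positivity
    linarith
  by_cases hσ0 : σ = 0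
  · have t := trivB hF (n / 4) jj gt B hgt M r0 (by rw [← hr0]; exact hB r0) g hg n (by omega) w
    refine t.trans (le_trans ?_ main2)
    rw [hσ0] at s2'
    have : (1 : ℝ) ≤ 2 * (A * x) / n := by
      rw [le_div_iff₀ n0]
      push_cast at s2'
      linarith
    calc (16 : ℝ) * (1 / 2) ^ M ≤ 16 * (1 / 2) ^ M * (2 * (A * x) / n) := le_mul_of_one_le_right (by positivity) this
      _ = (32 * A) / n * (x * (1 / 2) ^ M) := by ring
      _ ≤ (28 * A * P) / n * 0.86 ^ M := by
        have h6 : 32 * A ≤ 28 * A * P := by nlinarith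
        gcongr
  · have hσ1 : (1 : ℝ) ≤ σ := by exact_mod_cast Nat.one_le_iff_ne_zero.2 hσ0
    obtain ⟨k, hkd⟩ : ∃ k, k = n / (4 * σ) := ⟨_, rfl⟩
    have k1 : 4 * σ * k ≤ n := by rw [hkd]; exact Nat.mul_div_le _ _
    have k2 : n < 4 * σ * (k + 1) := by
      rw [hkd]
      exact Nat.lt_mul_div_succ n (by omega)
    have k2' : (n : ℝ) < 4 * σ * (k + 1) := by exact_mod_cast k2
    have hk : A * x / 2 ≤ k + 1 := by
      have : (σ : ℝ) * (2 * (A * x)) < σ * (4 * (k + 1)) := by nlinarith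
      have := lt_of_mul_lt_mul_left this (by linarith)
      linarith
    have hkpos : 0 < k := by
      rw [hkd]
      apply Nat.div_pos _ (by omega)
      have : (σ : ℝ) * 4 ≤ n := by nlinarith
      have : σ * 4 ≤ n := by exact_mod_cast this
      omega
    obtain ⟨n1, hn1⟩ : ∃ n1, n1 + 2 * σ * k = n := ⟨n - 2 * σ * k, by
      have : 2 * σ * k ≤ 4 * σ * k := by nlinarith
      omega⟩
    have hn1n : n ≤ 2 * n1 := by
      have : 4 * σ * k = 2 * (2 * σ * k) := by ring
      omega
    have hlt : n1 < n := by
      have : 0 < 2 * σ * k := by positivity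
      omega
    set e := A * x / n with he
    have he1 : (m : ℝ) * (819200000 * 1.21 ^ M / ((n / 4 : ℕ) : ℝ)) ≤ e := by
      have hN : (n : ℝ) / 8 ≤ ((n / 4 : ℕ) : ℝ) := by
        have : n ≤ 8 * (n / 4) := by omega
        have : (n : ℝ) ≤ 8 * ((n / 4 : ℕ) : ℝ) := by exact_mod_cast this
        linarith
      have hN0 : (0 : ℝ) < n / 8 := by positivity
      calc (m : ℝ) * (819200000 * 1.21 ^ M / ((n / 4 : ℕ) : ℝ)) ≤ m * (819200000 * 1.21 ^ M / (n / 8)) := by gcongr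
        _ = (m * 819200000 * 8) * x / n := by rw [hx]; field_simp
        _ ≤ _ := by rw [he]; gcongr
    have hσe : (σ : ℝ) * e ≤ 1 / 2 := by
      rw [he, ← mul_div_assoc, div_le_iff₀ n0]; linarith
    have hM' : ∀ w, |(opi F ^ n1) (g - (opi F ^ 2) g) w| ≤ 2 ^ m * (2 * Cs / n) := by
      intro w
      have hgc : g = cv (fun x => ∏ r, c r (x r)) (Box a l) := by
        rw [hg2, prod_cv]; rfl
      have h3 : (opi F ^ n1) (g - (opi F ^ 2) g) = cv (fun x => ∏ r, c r (x r)) ((opi F ^ n1) (Box a l - (opi F ^ 2) (Box a l))) := by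
        rw [hgc]
        unfold opi
        rw [pow_cv, ← cv_sub, pow_cv]
      rw [h3]
      have h4 : ∀ w, |(opi F ^ n1) (Box a l - (opi F ^ 2) (Box a l)) w| ≤ 2 * Cs / n := by
        intro w
        refine (IH n1 (by omega) hlt w).trans ?_
        have : (0 : ℝ) < n1 := by exact_mod_cast (by omega : 0 < n1)
        rw [div_le_div_iff₀ this n0]
        have : (n : ℝ) ≤ 2 * n1 := by exact_mod_cast hn1n
        nlinarith
      refine (abs_cv_le _ _ _ h4 w).trans ?_
      apply mul_le_mul_of_nonneg_right _ (by positivity)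
      simp only [Finset.abs_prod]
      rw [sum_prod_pi (fun r x => |c r x|)]
      calc ∏ r, ∑ x, |c r x| ≤ ∏ r : Fin m, (2 : ℝ) := Finset.prod_le_prod (fun r _ => Finset.sum_nonneg fun _ _ => abs_nonneg _) (fun r _ => hc r)
        _ = 2 ^ m := by simp
    have it := iterB hF (n / 4) (by omega) ii jj gt B hjL hP hgt hB M hM r0 hr0 g hg e he1 n1 σ (by omega) hσe _ hM' k w
    rw [hn1] at it
    refine it.trans ?_
    have b1 : 2 / ((σ : ℝ) + 1) ≤ 4 * e := by
      rw [div_le_iff₀ (by positivity), he]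
      rw [show 4 * (A * x / n) * ((σ : ℝ) + 1) = 2 * ((σ + 1) * (2 * (A * x))) / n by ring, le_div_iff₀ n0]
      linarith
    have e0 : 0 ≤ e := by positivity
    have b2 : 2 * ((2 / ((σ : ℝ) + 1) + 2 * e) * (P * 0.71 ^ M) + e * (8 * 0.71 ^ M)) ≤ 28 * A * P / n * 0.86 ^ M := by
      calc _ ≤ 2 * ((4 * e + 2 * e) * (P * 0.71 ^ M) + e * (2 * P * 0.71 ^ M)) := by
            gcongr; linarith
        _ = 16 * A * P / n * (x * 0.71 ^ M) := by rw [he]; ring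
        _ ≤ 28 * A * P / n * 0.86 ^ M := by gcongr; norm_num
    have b3 : (1 / 2 : ℝ) ^ k ≤ 2 / A * 0.86 ^ M := by
      have h5 : ((k : ℝ) + 1) ≤ 2 ^ k := by exact_mod_cast Nat.lt_two_pow_self (n := k)
      calc (1 / 2 : ℝ) ^ k = 1 / 2 ^ k := by rw [one_div_pow]
        _ ≤ 1 / (A * x / 2) := by
          apply one_div_le_one_div_of_le (by positivity); linarith
        _ = 2 / A * (1 / x) := by field_simp
        _ ≤ _ := by gcongr
    have b4 : (1 / 2 : ℝ) ^ k * (2 ^ m * (2 * Cs / n)) ≤ 2 / A * 0.86 ^ M * (2 ^ m * (2 * Cs / n)) := by gcongr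
    calc _ ≤ 28 * A * P / n * 0.86 ^ M + 2 / A * 0.86 ^ M * (2 ^ m * (2 * Cs / n)) := add_le_add b2 b4
      _ = _ := by rw [pow_add]; ring

theorem geo (m : ℕ) (hm : 0 < m) : ∃ l : ℝ, 0 < l ∧ l < 1 ∧ 0.86 ≤ l ^ m := by
  have m0 : (0 : ℝ) < m := by exact_mod_cast hm
  have m1 : (1 : ℝ) ≤ m := by exact_mod_cast hm
  have h : 0.14 / (m : ℝ) ≤ 0.14 := div_le_self (by norm_num) m1
  refine ⟨1 + -(0.14 / m), by linarith, by
    have : 0 < 0.14 / (m : ℝ) := by positivity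
    linarith, ?_⟩
  have := one_add_mul_le_pow (a := -(0.14 / (m : ℝ))) (by linarith) m
  refine le_trans (le_of_eq ?_) this
  field_simp; norm_num

theorem thmD (m : ℕ) (hm : 0 < m) : ∃ C : ℝ, 0 < C ∧ ∀ (L : ℕ) (F : (Fin m → ZL L) → ℝ), IsSP F →
    ∀ n : ℕ, 0 < n → ∀ a l w, |(opi F ^ n) (Box a l - (opi F ^ 2) (Box a l)) w| ≤ C / n := by
  classical
  obtain ⟨lam, l0, l1, lm⟩ := geo m hm
  have l2 : 0 < 1 - lam := by linarith
  obtain ⟨Γ, hΓ⟩ : ∃ Γ, Γ = (1 / (1 - lam)) ^ m := ⟨_, rfl⟩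
  have Γ0 : 0 < Γ := by rw [hΓ]; positivity
  obtain ⟨A, hAd⟩ : ∃ A : ℝ, A = m * 819200000 * 8 + 2 ^ (m + 3) * Γ + 2 := ⟨_, rfl⟩
  have q1 : (0 : ℝ) ≤ m * 819200000 * 8 := by positivity
  have q2 : 0 < 2 ^ (m + 3) * Γ := by positivity
  have A0 : 0 < A := by linarith
  obtain ⟨C, hC⟩ : ∃ C : ℝ, C = 8 + 56 * A * 2 ^ (15 * m + 2) * Γ := ⟨_, rfl⟩
  have q3 : 0 < 56 * A * 2 ^ (15 * m + 2) * Γ := by positivity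
  have C0 : 0 < C := by linarith
  refine ⟨C, C0, fun L F hF => ?_⟩
  intro n
  induction n using Nat.strong_induction_on with
  | _ n IH =>
  intro hn a l w
  have n0 : (0 : ℝ) < n := by exact_mod_cast hn
  by_cases h8 : n < 8
  · have e : (opi F ^ n) (Box a l - (opi F ^ 2) (Box a l)) w = (opi F ^ n) (Box a l) w - (opi F ^ (n + 2)) (Box a l) w := by
      rw [map_sub, pow_add, Module.End.mul_apply]; rfl
    have p : ∀ k, 0 ≤ (opi F ^ k) (Box a l) w ∧ (opi F ^ k) (Box a l) w ≤ 1 := fun k =>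
      ⟨pow_nonneg' _ hF k (Box_nonneg a l) w, pow_le_const _ hF k (Box_le_one a l) w⟩
    have : (1 : ℝ) ≤ C / n := by
      rw [le_div_iff₀ n0]
      have : (n : ℝ) < 8 := by exact_mod_cast h8
      linarith
    rw [e]
    refine le_trans ?_ this
    rw [abs_le]
    constructor <;> linarith [(p n).1, (p n).2, (p (n + 2)).1, (p (n + 2)).2]
  push Not at h8
  have hd := fun r => decomp1 (ev L r) hF (n / 4) (a r) (l r)
  choose jj c gt B hjL hP hc hgt hB hU hsum using hd
  have : Nonempty (Fin m) := ⟨⟨0, hm⟩⟩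
  let gi : (Fin m → ℕ) → (Fin m → ZL L) → ℝ := fun ii v => ∏ r, cv (c r (ii r)) (ind (ivs (a r) (l r))) (v r)
  let I := Fintype.piFinset fun _ : Fin m => Finset.range (L + 1)
  have hbox : Box a l = ∑ ii ∈ I, gi ii := by
    funext v
    rw [Finset.sum_apply]
    unfold Box
    simp only [gi, I]
    rw [← Finset.prod_univ_sum (fun _ : Fin m => Finset.range (L + 1)) (fun r i => cv (c r i) (ind (ivs (a r) (l r))) (v r))]
    exact Finset.prod_congr rfl fun r _ => hsum r (v r)
  have hsumT : (opi F ^ n) (Box a l - (opi F ^ 2) (Box a l)) w = ∑ ii ∈ I, (opi F ^ n) (gi ii - (opi F ^ 2) (gi ii)) w := by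
    rw [hbox, map_sum, ← Finset.sum_sub_distrib, map_sum, Finset.sum_apply]
  rw [hsumT]
  set D := (28 * A * 2 ^ (15 * m + 2) + 2 ^ (m + 2) * C / A) / n with hD
  have D0 : 0 ≤ D := by positivity
  have hone : ∀ ii ∈ I, |(opi F ^ n) (gi ii - (opi F ^ 2) (gi ii)) w| ≤ D * ∏ r, lam ^ (ii r) := by
    intro ii _
    obtain ⟨r0, -, hr0⟩ := Finset.exists_max_image Finset.univ ii Finset.univ_nonempty
    have h := oneIdx hF n h8 a l A C (by linarith) (by linarith) C0.le
      (fun n1 h1 h2 w => IH n1 h2 h1 a l w) ii (fun r => jj r (ii r)) (fun r => c r (ii r)) (fun r => gt r (ii r))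
      (fun r => B r (ii r)) (fun r => hjL r _) (fun r => hP r _) (fun r => hc r _) (fun r => hgt r _) (fun r => hB r _)
      (ii r0) (fun r => hr0 r (Finset.mem_univ r)) r0 rfl (gi ii)
      (by funext v; exact Finset.prod_congr rfl fun r _ => (hU r _ _).symm) rfl w
    refine h.trans (mul_le_mul_of_nonneg_left ?_ D0)
    calc (0.86 : ℝ) ^ (ii r0) ≤ (lam ^ m) ^ (ii r0) := by gcongr
      _ = ∏ r : Fin m, lam ^ (ii r0) := by simp [← pow_mul, mul_comm]
      _ ≤ _ := Finset.prod_le_prod (fun r _ => by positivity) (fun r _ => pow_le_pow_of_le_one l0.le l1.le (hr0 r (Finset.mem_univ r)))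
  refine (Finset.abs_sum_le_sum_abs _ _).trans ((Finset.sum_le_sum hone).trans ?_)
  rw [← Finset.mul_sum]
  have hs : ∑ ii ∈ I, ∏ r, lam ^ (ii r) ≤ Γ := by
    simp only [I]
    rw [← Finset.prod_univ_sum (fun _ : Fin m => Finset.range (L + 1)) (fun r i => lam ^ i), hΓ]
    rw [Finset.prod_const, Finset.card_univ, Fintype.card_fin]
    refine pow_le_pow_left₀ (Finset.sum_nonneg fun i _ => by positivity) ?_ m
    rw [one_div, ← tsum_geometric_of_lt_one l0.le l1]
    exact (summable_geometric_of_lt_one l0.le l1).sum_le_tsum _ (fun i _ => by positivity)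
  refine (mul_le_mul_of_nonneg_left hs D0).trans ?_
  rw [hD, div_mul_eq_mul_div]
  apply div_le_div_of_nonneg_right _ n0.le
  have : 2 ^ (m + 2) * C / A * Γ ≤ C / 2 := by
    rw [div_mul_eq_mul_div, div_le_iff₀ A0]
    have h1 : 2 ^ (m + 3) * Γ ≤ A := by linarith
    have h2 := mul_le_mul_of_nonneg_left h1 C0.le
    have h3 : (2 : ℝ) ^ (m + 3) = 2 * 2 ^ (m + 2) := by ring
    rw [h3] at h2
    linarith
  rw [add_mul]
  linarith

end asm
end Disc

namespace Disc

theorem pi_sum {α H : Type*} [MeasurableSpace α] [MeasurableSpace H] [AddCommMonoid H] [MeasurableAdd₂ H]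
    (F : Measure α) [IsProbabilityMeasure F] (f : α → H) (hf : Measurable f) (n : ℕ) :
    (Measure.pi (fun _ : Fin n => F)).map (fun x => ∑ i, f (x i)) = convPow (F.map f) n := by
  induction n with
  | zero =>
    simp [convPow, Measure.map_const]
  | succ n ih =>
    have hS : Measurable (fun x : Fin n → α => ∑ i, f (x i)) := by fun_prop
    have hp := measurePreserving_piFinSuccAbove (fun _ : Fin (n + 1) => F) (Fin.last n)
    have : IsProbabilityMeasure (F.map f) := Measure.isProbabilityMeasure_map hf.aemeasurable
    have hadd : Measurable (fun p : H × H => p.1 + p.2) := measurable_fst.add measurable_snd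
    rw [convPow, ← ih, mconv, Measure.map_prod_map _ _ hS hf, Measure.map_map hadd (hS.prodMap hf),
      ← Measure.prod_swap, Measure.map_map (hadd.comp (hS.prodMap hf)) measurable_swap]
    have hp2 := hp.map_eq
    rw [← hp2, Measure.map_map ((hadd.comp (hS.prodMap hf)).comp measurable_swap) (MeasurableEquiv.measurable _)]
    congr 1
    funext x
    rw [Fin.sum_univ_castSucc]
    simp [MeasurableEquiv.piFinSuccAbove, Fin.insertNthEquiv, Fin.removeNth, Fin.init]

theorem convPow_prob {α : Type*} [MeasurableSpace α] [AddCommMonoid α] [MeasurableAdd₂ α] (F : Measure α)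
    [IsProbabilityMeasure F] (n : ℕ) : IsProbabilityMeasure (convPow F n) := by
  have := pi_sum F id measurable_id n
  rw [Measure.map_id] at this
  rw [← this]
  have h : Measurable (fun x : Fin n → α => ∑ i, id (x i)) := Finset.measurable_sum _ fun i _ => measurable_pi_apply i
  exact Measure.isProbabilityMeasure_map h.aemeasurable

theorem int_pow {H : Type*} [MeasurableSpace H] [DiscreteMeasurableSpace H] [AddCommGroup H] [Fintype H]
    (μ : Measure H) [IsProbabilityMeasure μ] (n : ℕ) (g : H → ℝ) (w : H) :
    ∫ y, g (w + y) ∂(convPow μ n) = (opi (fun h => μ.real {h}) ^ n) g w := by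
  have hadd2 : MeasurableAdd₂ H := ⟨Measurable.of_discrete⟩
  induction n generalizing g w with
  | zero => simp [convPow]
  | succ n ih =>
    have hp := convPow_prob μ n
    rw [convPow, mconv, integral_map (Measurable.of_discrete).aemeasurable (Measurable.of_discrete).aestronglyMeasurable,
      integral_prod _ (Integrable.of_finite), pow_succ, Module.End.mul_apply, ← ih]
    refine integral_congr_ae (Filter.Eventually.of_forall fun y => ?_)
    show ∫ z, g (w + (y + z)) ∂μ = opi (fun h => μ.real {h}) g (w + y)
    rw [integral_fintype Integrable.of_finite, opi_apply]
    refine Finset.sum_congr rfl fun z _ => ?_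
    rw [smul_eq_mul, add_assoc]

theorem ivs_exists {L : ℕ} (K : ℕ) (hK : 2 * K < 2 ^ L) (A : Set ℤ) (hA : ∀ z ∈ A, |z| ≤ K)
    (hoc : ∀ x ∈ A, ∀ y ∈ A, ∀ z, x ≤ z → z ≤ y → z ∈ A) :
    ∃ (a : ZL L) (l : ℕ), ∀ z : ℤ, |z| ≤ K → ((z : ZL L) ∈ ivs a l ↔ z ∈ A) := by
  by_cases hne : A.Nonempty
  · obtain ⟨lo, hlo, hlo2⟩ := Int.exists_least_of_bdd (P := fun z => z ∈ A)
      ⟨-K, fun z hz => (abs_le.1 (hA z hz)).1⟩ hne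
    obtain ⟨hi, hhi, hhi2⟩ := Int.exists_greatest_of_bdd (P := fun z => z ∈ A)
      ⟨K, fun z hz => (abs_le.1 (hA z hz)).2⟩ hne
    have b1 := abs_le.1 (hA lo hlo)
    have b2 := abs_le.1 (hA hi hhi)
    refine ⟨(lo : ZL L), (hi - lo + 1).toNat, fun z hz => ?_⟩
    have b3 := abs_le.1 hz
    rw [mem_ivs]
    constructor
    · rintro ⟨i, hi1, h⟩
      have hle : lo + i ≤ hi := by omega
      have hmem : lo + (i : ℤ) ∈ A := hoc lo hlo hi hhi _ (by omega) hle
      have b4 := abs_le.1 (hA _ hmem)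
      have h2 : ((lo + i - z : ℤ) : ZMod (2 ^ L)) = 0 := by
        push_cast
        rw [sub_eq_zero]; exact_mod_cast h
      rw [ZMod.intCast_zmod_eq_zero_iff_dvd] at h2
      have hlt : |lo + i - z| < ((2 ^ L : ℕ) : ℤ) := by
        have : (2 * K : ℤ) < ((2 ^ L : ℕ) : ℤ) := by exact_mod_cast hK
        rw [abs_lt]; constructor <;> linarith
      have := Int.eq_zero_of_abs_lt_dvd h2 hlt
      rw [show z = lo + i by linarith]
      exact hmem
    · intro hzA
      refine ⟨(z - lo).toNat, ?_, ?_⟩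
      · have := hlo2 z hzA
        have := hhi2 z hzA
        omega
      · have h1 := hlo2 z hzA
        have : (((z - lo).toNat : ℕ) : ℤ) = z - lo := Int.toNat_of_nonneg (by omega)
        have h3 : (((z - lo).toNat : ℕ) : ZL L) = (((z - lo).toNat : ℤ) : ZL L) := by push_cast; rfl
        rw [h3, this]; push_cast; ring
  · refine ⟨0, 0, fun z _ => ?_⟩
    rw [mem_ivs]
    constructor
    · rintro ⟨i, h, _⟩; omega
    · intro h; exact absurd ⟨z, h⟩ hne

/-- odd rounding of `2 s` -/
noncomputable def rd (s : ℝ) : ℤ := ⌊s⌋ + ⌈s⌉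

theorem rd_neg (s : ℝ) : rd (-s) = -rd s := by
  unfold rd; rw [Int.floor_neg, Int.ceil_neg]; ring

theorem rd_near (s : ℝ) : |(rd s : ℝ) - 2 * s| ≤ 1 := by
  unfold rd
  push_cast
  rw [abs_le]
  constructor <;> linarith [Int.floor_le s, Int.lt_floor_add_one s, Int.le_ceil s, Int.ceil_lt_add_one s]

theorem rd_meas : Measurable rd := Int.measurable_floor.add Int.measurable_ceil

end Disc

namespace Disc

theorem discEvent {d m L : ℕ} (C : ℝ) (hC : ∀ (F : (Fin m → ZL L) → ℝ), IsSP F →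
    ∀ n : ℕ, 0 < n → ∀ a l w, |(opi F ^ n) (Box a l - (opi F ^ 2) (Box a l)) w| ≤ C / n)
    (F : Measure (Euc d)) [IsProbabilityMeasure F] (hsym : IsSymmMeasure F)
    (c : Euc d → Fin m → ZL L) (hc : Measurable c) (hodd : ∀ x, c (-x) = -c x)
    (n : ℕ) (hn : 0 < n) (a : Fin m → ZL L) (l : Fin m → ℕ) :
    |(Measure.pi (fun _ : Fin n => F)).real {ω | ∀ j, (∑ i, c (ω i)) j ∈ ivs (a j) (l j)}
      - (Measure.pi (fun _ : Fin (n + 2) => F)).real {ω | ∀ j, (∑ i, c (ω i)) j ∈ ivs (a j) (l j)}| ≤ C / n := by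
  classical
  have hadd2 : MeasurableAdd₂ (Fin m → ZL L) := ⟨Measurable.of_discrete⟩
  have hpr : IsProbabilityMeasure (F.map c) := Measure.isProbabilityMeasure_map hc.aemeasurable
  set F' : (Fin m → ZL L) → ℝ := fun h => (F.map c).real {h} with hF'
  have hSP : IsSP F' := by
    refine ⟨fun y => measureReal_nonneg, ?_, ?_⟩
    · simp only [hF']
      rw [sum_measureReal_singleton]; simp
    · intro y
      simp only [hF']
      rw [map_measureReal_apply hc (measurableSet_singleton _), map_measureReal_apply hc (measurableSet_singleton _)]
      conv_lhs => rw [← hsym]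
      rw [map_measureReal_apply measurable_neg (hc (measurableSet_singleton _))]
      congr 1
      ext x
      simp [hodd]
  have key : ∀ k, (Measure.pi (fun _ : Fin k => F)).real {ω | ∀ j, (∑ i, c (ω i)) j ∈ ivs (a j) (l j)} = (opi F' ^ k) (Box a l) 0 := by
    intro k
    have hS : Measurable (fun ω : Fin k → Euc d => ∑ i, c (ω i)) :=
      Finset.measurable_sum _ fun i _ => hc.comp (measurable_pi_apply i)
    rw [← int_pow, ← pi_sum F c hc k]
    have hset : MeasurableSet {v : Fin m → ZL L | ∀ j, v j ∈ ivs (a j) (l j)} := MeasurableSet.of_discrete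
    have hB : (fun y => Box a l (0 + y)) = Set.indicator {v : Fin m → ZL L | ∀ j, v j ∈ ivs (a j) (l j)} 1 := by
      funext y
      rw [zero_add]
      by_cases hy : ∀ j, y j ∈ ivs (a j) (l j)
      · rw [Set.indicator_of_mem (by exact hy)]
        exact Finset.prod_eq_one fun r _ => if_pos (hy r)
      · rw [Set.indicator_of_notMem (by exact hy)]
        push Not at hy
        obtain ⟨r, hr⟩ := hy
        exact Finset.prod_eq_zero (Finset.mem_univ r) (if_neg hr)
    rw [hB, integral_indicator_one hset, map_measureReal_apply hS hset]
    rfl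
  rw [key, key]
  have := hC F' hSP n hn a l 0
  rw [map_sub, pow_pow_apply] at this
  exact this

end Disc

namespace Disc

theorem upEv (y : ℝ) (a : EReal) (f : ℕ → ℝ) (h1 : ∀ i, y ≤ f i) (h2 : ∀ i : ℕ, f i ≤ y + 2 * (1 / ((i : ℝ) + 1))) :
    ∀ᶠ i in Filter.atTop, (a ≤ (f i : EReal) ↔ a ≤ (y : EReal)) := by
  by_cases h : a ≤ (y : EReal)
  · exact Filter.Eventually.of_forall fun i => ⟨fun _ => h, fun _ => h.trans (EReal.coe_le_coe_iff.2 (h1 i))⟩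
  · have ht : Filter.Tendsto (fun i : ℕ => y + 2 * (1 / ((i : ℝ) + 1))) Filter.atTop (nhds (y + 2 * 0)) :=
      (tendsto_one_div_add_atTop_nhds_zero_nat.const_mul 2).const_add y
    rw [mul_zero, add_zero] at ht
    have ht2 := (continuous_coe_real_ereal.tendsto y).comp ht
    filter_upwards [ht2.eventually_lt_const (not_le.1 h)] with i hi
    refine ⟨fun h' => absurd (h'.trans (EReal.coe_le_coe_iff.2 (h2 i))) (not_le.2 hi), fun h' => absurd h' h⟩

theorem dnEv (y : ℝ) (a : EReal) (f : ℕ → ℝ) (h1 : ∀ i, f i ≤ y) (h2 : ∀ i : ℕ, y - 2 * (1 / ((i : ℝ) + 1)) ≤ f i) :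
    ∀ᶠ i in Filter.atTop, ((f i : EReal) ≤ a ↔ (y : EReal) ≤ a) := by
  by_cases h : (y : EReal) ≤ a
  · exact Filter.Eventually.of_forall fun i => ⟨fun _ => h, fun _ => (EReal.coe_le_coe_iff.2 (h1 i)).trans h⟩
  · have ht : Filter.Tendsto (fun i : ℕ => y - 2 * (1 / ((i : ℝ) + 1))) Filter.atTop (nhds (y - 2 * 0)) :=
      (tendsto_one_div_add_atTop_nhds_zero_nat.const_mul 2).const_sub y
    rw [mul_zero, sub_zero] at ht
    have ht2 := (continuous_coe_real_ereal.tendsto y).comp ht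
    filter_upwards [ht2.eventually_const_lt (not_le.1 h)] with i hi
    refine ⟨fun h' => absurd ((EReal.coe_le_coe_iff.2 (h2 i)).trans h') (not_le.2 hi), fun h' => absurd h' h⟩

theorem limAux {Ω : Type*} [MeasurableSpace Ω] (μ : Measure Ω) [IsFiniteMeasure μ] (E : ℕ → Set Ω) (A : Set Ω)
    (hE : ∀ i, MeasurableSet (E i)) (h : ∀ ω, ∀ᶠ i in Filter.atTop, (ω ∈ E i ↔ ω ∈ A)) :
    Filter.Tendsto (fun i => μ.real (E i)) Filter.atTop (nhds (μ A).toReal) :=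
  (ENNReal.tendsto_toReal (measure_ne_top _ _)).comp
    (tendsto_measure_of_tendsto_indicator_of_isFiniteMeasure Filter.atTop μ hE h)

set_option maxHeartbeats 400000 in
theorem polyBound {d m : ℕ} (C : ℝ) (hC : ∀ (L : ℕ) (F : (Fin m → ZL L) → ℝ), IsSP F →
    ∀ n : ℕ, 0 < n → ∀ a l w, |(opi F ^ n) (Box a l - (opi F ^ 2) (Box a l)) w| ≤ C / n)
    (F : Measure (Euc d)) [IsProbabilityMeasure F] (hsym : IsSymmMeasure F)
    (n : ℕ) (hn : 0 < n) (X : Set (Euc d)) (hX : X ∈ polyhedra d m) :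
    |(convPow F n X).toReal - (convPow F (n + 2) X).toReal| ≤ C / n := by
  obtain ⟨t, a, b, rfl⟩ := hX
  set X : Set (Euc d) := {x | ∀ j, a j ≤ ((⟪x, t j⟫ : ℝ) : EReal) ∧ ((⟪x, t j⟫ : ℝ) : EReal) ≤ b j} with hXd
  let q : ℕ → ℝ := fun i => ((n : ℝ) + 2) * ((i : ℝ) + 1)
  have q0 : ∀ i, 0 < q i := fun i => by positivity
  let K : ℕ → ℕ := fun i => i * (i + 1) * (n + 2)
  let L : ℕ → ℕ := fun i => 2 * K i + 1
  have hL : ∀ i, 2 * K i < 2 ^ L i := fun i =>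
    lt_of_lt_of_le (Nat.lt_two_pow_self) (Nat.pow_le_pow_right (by norm_num) (by simp [L]))
  let Z : ℕ → Fin m → Set ℤ := fun i j => {z | |z| ≤ K i ∧ a j ≤ ((((z : ℝ) + (n + 2)) / q i : ℝ) : EReal) ∧
    ((((z : ℝ) - (n + 2)) / q i : ℝ) : EReal) ≤ b j}
  have hZ : ∀ i j, ∃ (av : ZL (L i)) (l : ℕ), ∀ z : ℤ, |z| ≤ K i → ((z : ZL (L i)) ∈ ivs av l ↔ z ∈ Z i j) := by
    intro i j
    refine ivs_exists (K i) (hL i) (Z i j) (fun z hz => hz.1) ?_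
    intro x hx y hy z hxz hzy
    have h1 : (x : ℝ) ≤ z := by exact_mod_cast hxz
    have h2 : (z : ℝ) ≤ y := by exact_mod_cast hzy
    refine ⟨?_, hx.2.1.trans (EReal.coe_le_coe_iff.2 ?_), (EReal.coe_le_coe_iff.2 ?_).trans hy.2.2⟩
    · have := abs_le.1 hx.1
      have := abs_le.1 hy.1
      rw [abs_le]; constructor <;> omega
    · have := q0 i
      gcongr
    · have := q0 i
      gcongr
  choose av l hav using hZ
  let D : ℕ → Euc d → Fin m → ℤ := fun i x j => rd (q i / 2 * ⟪x, t j⟫)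
  let c : ∀ i, Euc d → Fin m → ZL (L i) := fun i x j => ((D i x j : ℤ) : ZL (L i))
  have hin : ∀ j, Measurable fun x : Euc d => (⟪x, t j⟫ : ℝ) := fun j => by fun_prop
  have hcm : ∀ i, Measurable (c i) := by
    intro i
    refine measurable_pi_lambda _ fun j => ?_
    exact (Measurable.of_discrete (f := fun z : ℤ => (z : ZL (L i)))).comp (rd_meas.comp ((hin j).const_mul _))
  have hodd : ∀ i x, c i (-x) = -c i x := by
    intro i x
    funext j
    simp only [c, D, Pi.neg_apply]
    rw [inner_neg_left, mul_neg, rd_neg]; push_cast; rfl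
  have hXm : MeasurableSet X := by
    have : X = ⋂ j, ({x | a j ≤ ((⟪x, t j⟫ : ℝ) : EReal)} ∩ {x | ((⟪x, t j⟫ : ℝ) : EReal) ≤ b j}) := by
      ext x; simp [hXd]
    rw [this]
    refine MeasurableSet.iInter fun j => MeasurableSet.inter ?_ ?_
    · exact measurableSet_le measurable_const (measurable_coe_real_ereal.comp (hin j))
    · exact measurableSet_le (measurable_coe_real_ereal.comp (hin j)) measurable_const
  let E : ∀ (k i : ℕ), Set (Fin k → Euc d) := fun k i => {ω | ∀ j, (∑ s, c i (ω s)) j ∈ ivs (av i j) (l i j)}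
  have hE : ∀ k i, MeasurableSet (E k i) := by
    intro k i
    have hS : Measurable (fun ω : Fin k → Euc d => ∑ s, c i (ω s)) :=
      Finset.measurable_sum _ fun s _ => (hcm i).comp (measurable_pi_apply s)
    exact hS (MeasurableSet.of_discrete (s := {v : Fin m → ZL (L i) | ∀ j, v j ∈ ivs (av i j) (l i j)}))
  have hsumm : ∀ k, Measurable (fun ω : Fin k → Euc d => ∑ s, ω s) := fun k =>
    Finset.measurable_sum _ fun s _ => measurable_pi_apply s
  have hev : ∀ k, k ≤ n + 2 → ∀ ω : Fin k → Euc d, ∀ᶠ i in Filter.atTop, (ω ∈ E k i ↔ ω ∈ {ω | ∑ s, ω s ∈ X}) := by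
    intro k hk ω
    have hj : ∀ j, ∀ᶠ i in Filter.atTop, ((∑ s, c i (ω s)) j ∈ ivs (av i j) (l i j) ↔
        (a j ≤ ((⟪∑ s, ω s, t j⟫ : ℝ) : EReal) ∧ ((⟪∑ s, ω s, t j⟫ : ℝ) : EReal) ≤ b j)) := by
      intro j
      set y : ℝ := ⟪∑ s, ω s, t j⟫ with hy
      let z : ℕ → ℤ := fun i => ∑ s, D i (ω s) j
      have hnear : ∀ i, |(z i : ℝ) - q i * y| ≤ n + 2 := by
        intro i
        have e1 : (z i : ℝ) - q i * y = ∑ s, ((D i (ω s) j : ℝ) - 2 * (q i / 2 * ⟪ω s, t j⟫)) := by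
          rw [hy, sum_inner, Finset.sum_sub_distrib, Finset.mul_sum]
          simp only [z]
          push_cast
          congr 1
          refine Finset.sum_congr rfl fun s _ => ?_
          ring
        rw [e1]
        refine (Finset.abs_sum_le_sum_abs _ _).trans ?_
        calc ∑ s, |(D i (ω s) j : ℝ) - 2 * (q i / 2 * ⟪ω s, t j⟫)| ≤ ∑ s : Fin k, (1 : ℝ) :=
              Finset.sum_le_sum fun s _ => rd_near _
          _ = k := by simp
          _ ≤ _ := by exact_mod_cast hk
      have hr : ∀ i : ℕ, ((n : ℝ) + 2) / q i = 1 / ((i : ℝ) + 1) := by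
        intro i
        have : (0 : ℝ) < n + 2 := by positivity
        simp only [q]; field_simp
      have hup := upEv y (a j) (fun i => ((z i : ℝ) + (n + 2)) / q i)
        (fun i => by
          rw [le_div_iff₀ (q0 i)]
          have := abs_le.1 (hnear i)
          linarith) (fun i => by
          rw [← hr, div_le_iff₀ (q0 i)]
          have := abs_le.1 (hnear i)
          have h3 : (y + 2 * (((n : ℝ) + 2) / q i)) * q i = y * q i + 2 * (n + 2) := by
            have := (q0 i).ne'
            field_simp
          rw [h3]
          linarith)
      have hdn := dnEv y (b j) (fun i => ((z i : ℝ) - (n + 2)) / q i)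
        (fun i => by
          rw [div_le_iff₀ (q0 i)]
          have := abs_le.1 (hnear i)
          linarith) (fun i => by
          rw [← hr, le_div_iff₀ (q0 i)]
          have := abs_le.1 (hnear i)
          have h3 : (y - 2 * (((n : ℝ) + 2) / q i)) * q i = y * q i - 2 * (n + 2) := by
            have := (q0 i).ne'
            field_simp
          rw [h3]
          linarith)
      filter_upwards [hup, hdn, Filter.eventually_ge_atTop ⌈|y| + 1⌉₊] with i h1 h2 h3
      have h4 : |y| + 1 ≤ i := (Nat.le_ceil _).trans (by exact_mod_cast h3)
      have hzK : |z i| ≤ K i := by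
        have : |(z i : ℝ)| ≤ (K i : ℝ) := by
          have e1 : |(z i : ℝ)| ≤ (n + 2) + q i * |y| := by
            calc |(z i : ℝ)| = |((z i : ℝ) - q i * y) + q i * y| := by ring_nf
              _ ≤ |(z i : ℝ) - q i * y| + |q i * y| := abs_add_le _ _
              _ ≤ _ := by rw [abs_mul, abs_of_pos (q0 i)]; linarith [hnear i]
          have e2 : ((n : ℝ) + 2) ≤ q i := by
            simp only [q]
            have : (0 : ℝ) ≤ i := by positivity
            nlinarith [(by positivity : (0 : ℝ) ≤ n)]
          have e3 : (K i : ℝ) = q i * i := by simp only [K, q]; push_cast; ring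
          rw [e3]
          nlinarith [q0 i]
        exact_mod_cast this
      have hcz : (∑ s, c i (ω s)) j = ((z i : ℤ) : ZL (L i)) := by
        simp [c, z, Finset.sum_apply]
      rw [hcz, hav i j _ hzK]
      show (_ ∧ _ ∧ _) ↔ _
      rw [h1, h2]
      exact ⟨fun h => h.2, fun h => ⟨hzK, h⟩⟩
    filter_upwards [Filter.eventually_all.2 hj] with i hi
    exact forall_congr' hi
  have hlim : ∀ k, k ≤ n + 2 → Filter.Tendsto (fun i => (Measure.pi (fun _ : Fin k => F)).real (E k i)) Filter.atTop
      (nhds (convPow F k X).toReal) := by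
    intro k hk
    have h1 := limAux (Measure.pi (fun _ : Fin k => F)) (E k) {ω | ∑ s, ω s ∈ X} (hE k) (hev k hk)
    have h2 : convPow F k X = (Measure.pi (fun _ : Fin k => F)) {ω | ∑ s, ω s ∈ X} := by
      have := pi_sum F id measurable_id k
      rw [Measure.map_id] at this
      rw [← this]
      exact Measure.map_apply (hsumm k) hXm
    rw [h2]
    exact h1
  have := ((hlim n (by omega)).sub (hlim (n + 2) le_rfl)).abs
  exact le_of_tendsto this (Filter.Eventually.of_forall fun i =>
    discEvent C (hC (L i)) F hsym (c i) (hcm i) (hodd i) n hn (av i) (l i))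

theorem tele (P : ℕ → ℝ) (C : ℝ) (hC : 0 ≤ C) (h : ∀ n : ℕ, 0 < n → |P n - P (n + 2)| ≤ C / n) (n k : ℕ) (hn : 0 < n) :
    |P n - P (n + 2 * k)| ≤ C * k * (n : ℝ)⁻¹ := by
  have n0 : (0 : ℝ) < n := by exact_mod_cast hn
  induction k with
  | zero => simp
  | succ k ih =>
    have h1 := h (n + 2 * k) (by omega)
    have h2 : C / ((n + 2 * k : ℕ) : ℝ) ≤ C * (n : ℝ)⁻¹ := by
      rw [← div_eq_mul_inv]
      apply div_le_div_of_nonneg_left hC n0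
      push_cast; linarith [(by positivity : (0 : ℝ) ≤ k)]
    have h3 := abs_sub_le (P n) (P (n + 2 * k)) (P (n + 2 * k + 2))
    rw [show n + 2 * (k + 1) = n + 2 * k + 2 by ring]
    push_cast
    have : C * ((k : ℝ) + 1) * (n : ℝ)⁻¹ = C * k * (n : ℝ)⁻¹ + C * (n : ℝ)⁻¹ := by ring
    linarith

end Disc

theorem stmt10 :
    ∃ C : ℕ → ℝ, (∀ m, 0 < C m) ∧
      ∀ (d m k n : ℕ), 0 < d → 0 < m → 0 < k → 0 < n →
        ∀ F : Measure (Euc d), IsProbabilityMeasure F → IsSymmMeasure F →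
          rhoPoly m (convPow F n) (convPow F (n + 2 * k)) ≤ C m * k * (n : ℝ)⁻¹ := by
  classical
  refine ⟨fun m => if h : 0 < m then (Disc.thmD m h).choose else 1, ?_, ?_⟩
  · intro m
    by_cases h : 0 < m
    · simp only [h, dif_pos]; exact (Disc.thmD m h).choose_spec.1
    · simp only [h, dif_neg, not_false_eq_true]; norm_num
  · intro d m k n hd hm hk hn F hF hsym
    simp only [hm, dif_pos]
    obtain ⟨C0, hC⟩ := (Disc.thmD m hm).choose_spec
    set C := (Disc.thmD m hm).choose
    have hnn : 0 ≤ C * k * (n : ℝ)⁻¹ := by positivity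
    unfold rhoPoly
    refine Real.iSup_le (fun X => Real.iSup_le (fun hX => ?_) hnn) hnn
    exact Disc.tele (fun n => (convPow F n X).toReal) C C0.le
      (fun n hn => Disc.polyBound C hC F hsym n hn X hX) n k hn
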